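/- arXiv:0705.3918 — 3 statements merged into one kernel-verified Lean document; each statement's English description precedes it below -/
import Mathlib

section
/- Let Φ be a Leonard system with parameter array ({θ_i}; {θ*_i}; {φ_i}; {ϕ_i}) and write φ = φ_1⋯φ_d. Then for 0 ≤ r ≤ d, E*_0 E_d E*_d E_r = (φ / (τ_d(θ_d) τ*_d(θ*_d))) · (ϕ_d ϕ_{d−1} ⋯ ϕ_{d−r+1}) / (φ_1 φ_2 ⋯ φ_r) · E*_0 E_r. -/
open Matrix Polynomial

/-- A Leonard system in the matrix algebra `Mat_{d+1}(K)`: multiplicity-free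
elements `A`, `Astar` with orderings `E`, `Estar` of their primitive idempotents
satisfying the irreducible-tridiagonality conditions. -/
structure LeonardSystem (K : Type*) [Field K] (d : ℕ) where
  A : Matrix (Fin (d+1)) (Fin (d+1)) K
  Astar : Matrix (Fin (d+1)) (Fin (d+1)) K
  E : Fin (d+1) → Matrix (Fin (d+1)) (Fin (d+1)) K
  Estar : Fin (d+1) → Matrix (Fin (d+1)) (Fin (d+1)) K
  θ : Fin (d+1) → K
  θs : Fin (d+1) → K
  θ_inj : Function.Injective θ
  θs_inj : Function.Injective θs
  E_ne : ∀ i, E i ≠ 0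
  Es_ne : ∀ i, Estar i ≠ 0
  E_mul : ∀ i j, E i * E j = if i = j then E i else 0
  Es_mul : ∀ i j, Estar i * Estar j = if i = j then Estar i else 0
  E_sum : ∑ i, E i = 1
  Es_sum : ∑ i, Estar i = 1
  A_eq : A = ∑ i, θ i • E i
  As_eq : Astar = ∑ i, θs i • Estar i
  trid0 : ∀ i j : Fin (d+1), ((i : ℤ) - (j : ℤ)).natAbs > 1 → E i * Astar * E j = 0
  trid1 : ∀ i j : Fin (d+1), ((i : ℤ) - (j : ℤ)).natAbs = 1 → E i * Astar * E j ≠ 0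
  strid0 : ∀ i j : Fin (d+1), ((i : ℤ) - (j : ℤ)).natAbs > 1 → Estar i * A * Estar j = 0
  strid1 : ∀ i j : Fin (d+1), ((i : ℤ) - (j : ℤ)).natAbs = 1 → Estar i * A * Estar j ≠ 0

namespace LeonardSystem

variable {K : Type*} [Field K] {d : ℕ}

/-- Eigenvalues indexed by `ℕ` (junk value outside range). -/
def θN (L : LeonardSystem K d) (i : ℕ) : K := if h : i < d + 1 then L.θ ⟨i, h⟩ else 0

def θsN (L : LeonardSystem K d) (i : ℕ) : K := if h : i < d + 1 then L.θs ⟨i, h⟩ else 0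

/-- `τ_i(A) = (A-θ₀)(A-θ₁)⋯(A-θ_{i-1})`. -/
def tauA (L : LeonardSystem K d) : ℕ → Matrix (Fin (d+1)) (Fin (d+1)) K
  | 0 => 1
  | i + 1 => L.tauA i * (L.A - L.θN i • 1)

/-- `η_i(A) = (A-θ_d)(A-θ_{d-1})⋯(A-θ_{d-i+1})`. -/
def etaA (L : LeonardSystem K d) : ℕ → Matrix (Fin (d+1)) (Fin (d+1)) K
  | 0 => 1
  | i + 1 => L.etaA i * (L.A - L.θN (d - i) • 1)

/-- `τ*_i(A*)`. -/
def tausA (L : LeonardSystem K d) : ℕ → Matrix (Fin (d+1)) (Fin (d+1)) K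
  | 0 => 1
  | i + 1 => L.tausA i * (L.Astar - L.θsN i • 1)

/-- `η*_i(A*)`. -/
def etasA (L : LeonardSystem K d) : ℕ → Matrix (Fin (d+1)) (Fin (d+1)) K
  | 0 => 1
  | i + 1 => L.etasA i * (L.Astar - L.θsN (d - i) • 1)

/-- Scalar `τ_i(x)`. -/
def tauS (L : LeonardSystem K d) (i : ℕ) (x : K) : K := ∏ j ∈ Finset.range i, (x - L.θN j)

/-- Scalar `η_i(x)`. -/
def etaS (L : LeonardSystem K d) (i : ℕ) (x : K) : K := ∏ j ∈ Finset.range i, (x - L.θN (d - j))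

/-- Scalar `τ*_i(x)`. -/
def tausS (L : LeonardSystem K d) (i : ℕ) (x : K) : K := ∏ j ∈ Finset.range i, (x - L.θsN j)

/-- Scalar `η*_i(x)`. -/
def etasS (L : LeonardSystem K d) (i : ℕ) (x : K) : K := ∏ j ∈ Finset.range i, (x - L.θsN (d - j))

/-- First split sequence `φ_i`. -/
noncomputable def varphi (L : LeonardSystem K d) (i : ℕ) : K :=
  (L.θsN 0 - L.θsN i) * (L.tauA i * L.Estar 0).trace / (L.tauA (i-1) * L.Estar 0).trace

/-- Second split sequence `ϕ_i`. -/
noncomputable def phi (L : LeonardSystem K d) (i : ℕ) : K :=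
  (L.θsN 0 - L.θsN i) * (L.etaA i * L.Estar 0).trace / (L.etaA (i-1) * L.Estar 0).trace

/-- `φ₁φ₂⋯φ_r`. -/
noncomputable def varphiProd (L : LeonardSystem K d) (r : ℕ) : K :=
  ∏ j ∈ Finset.range r, L.varphi (j + 1)

/-- `ϕ₁ϕ₂⋯ϕ_r`. -/
noncomputable def phiProd (L : LeonardSystem K d) (r : ℕ) : K :=
  ∏ j ∈ Finset.range r, L.phi (j + 1)

/-- `φ_d φ_{d-1} ⋯ φ_{d-r+1}`. -/
noncomputable def varphiRevProd (L : LeonardSystem K d) (r : ℕ) : K :=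
  ∏ j ∈ Finset.range r, L.varphi (d - j)

/-- `ϕ_d ϕ_{d-1} ⋯ ϕ_{d-r+1}`. -/
noncomputable def phiRevProd (L : LeonardSystem K d) (r : ℕ) : K :=
  ∏ j ∈ Finset.range r, L.phi (d - j)

end LeonardSystem
namespace LeonardSystem

section aux
variable {K : Type*} [Field K] {d : ℕ}

theorem aux_rank_one (E : Fin (d+1) → Matrix (Fin (d+1)) (Fin (d+1)) K)
    (hne : ∀ i, E i ≠ 0) (hmul : ∀ i j, E i * E j = if i = j then E i else 0) (i : Fin (d+1)) :
    ∃ v f : Fin (d+1) → K, E i = vecMulVec v f ∧ f ⬝ᵥ v = 1 := by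
  have h1 : ∀ i, ∃ v : Fin (d+1) → K, v ≠ 0 ∧ E i *ᵥ v = v := by
    intro i
    by_contra! hcon
    apply hne i
    apply Matrix.ext_of_mulVec_single
    intro j
    by_contra hj
    simp only [Matrix.zero_mulVec] at hj
    apply hcon (E i *ᵥ Pi.single j 1) hj
    rw [Matrix.mulVec_mulVec, hmul, if_pos rfl]
  choose v hv0 hv using h1
  let P : Matrix (Fin (d+1)) (Fin (d+1)) K := Matrix.of fun a b => v b a
  have hEv : ∀ i j, E i *ᵥ v j = if i = j then v j else 0 := by
    intro i j
    conv_lhs => rw [← hv j]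
    rw [Matrix.mulVec_mulVec, hmul]
    split_ifs with h
    · subst h; exact hv i
    · simp
  have hEP : ∀ i, E i * P = vecMulVec (v i) (Pi.single i 1) := by
    intro i
    ext a b
    have h2 : (E i * P) a b = (E i *ᵥ v b) a := rfl
    rw [h2, hEv, vecMulVec_apply]
    by_cases h : i = b
    · subst h; simp
    · simp [h, Ne.symm h]
  have hinj : Function.Injective P.mulVec := by
    rw [← Matrix.coe_mulVecLin, injective_iff_map_eq_zero]
    intro c hc
    ext i
    have h3 : E i *ᵥ (P *ᵥ c) = 0 := by
      rw [Matrix.mulVecLin_apply] at hc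
      rw [hc]; simp
    rw [Matrix.mulVec_mulVec, hEP] at h3
    obtain ⟨a, ha⟩ := Function.ne_iff.mp (hv0 i)
    have h4 := congrFun h3 a
    simp [Matrix.mulVec, dotProduct, vecMulVec_apply, Pi.single_apply] at h4
    rcases h4 with h4 | h4
    · exact absurd h4 ha
    · exact h4
  have hu : IsUnit P := Matrix.mulVec_injective_iff_isUnit.mp hinj
  have hdet : IsUnit P.det := (Matrix.isUnit_iff_isUnit_det _).mp hu
  have hE : E i = vecMulVec (v i) (Pi.single i 1 ᵥ* P⁻¹) := by
    calc E i = E i * P * P⁻¹ := by rw [Matrix.mul_assoc, Matrix.mul_nonsing_inv _ hdet, Matrix.mul_one]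
      _ = _ := by rw [hEP, Matrix.vecMulVec_mul]
  refine ⟨v i, _, hE, ?_⟩
  have h5 := hv i
  rw [hE, Matrix.vecMulVec_mulVec] at h5
  obtain ⟨a, ha⟩ := Function.ne_iff.mp (hv0 i)
  have h6 := congrFun h5 a
  simp only [Pi.smul_apply, MulOpposite.smul_eq_mul_unop, MulOpposite.unop_op] at h6
  exact mul_left_cancel₀ ha (by rw [h6, mul_one])

/-- Rank one consequences. -/
theorem aux_sandwich {P : Matrix (Fin (d+1)) (Fin (d+1)) K}
    (h : ∃ v f : Fin (d+1) → K, P = vecMulVec v f ∧ f ⬝ᵥ v = 1)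
    (X Y : Matrix (Fin (d+1)) (Fin (d+1)) K) (hX : X * P ≠ 0) (hY : P * Y ≠ 0) :
    X * P * Y ≠ 0 := by
  obtain ⟨v, f, rfl, -⟩ := h
  rw [Matrix.mul_vecMulVec] at hX ⊢
  rw [Matrix.vecMulVec_mul] at hY ⊢
  intro h0
  rw [Matrix.vecMulVec_eq_zero] at h0
  rcases h0 with h0 | h0
  · rw [h0] at hX; simp at hX
  · rw [h0] at hY; simp at hY

theorem aux_trace {P : Matrix (Fin (d+1)) (Fin (d+1)) K}
    (h : ∃ v f : Fin (d+1) → K, P = vecMulVec v f ∧ f ⬝ᵥ v = 1) : P.trace = 1 := by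
  obtain ⟨v, f, rfl, h⟩ := h
  rw [Matrix.trace_vecMulVec, dotProduct_comm]; exact h

theorem aux_prop {P Q : Matrix (Fin (d+1)) (Fin (d+1)) K}
    (hP : ∃ v f : Fin (d+1) → K, P = vecMulVec v f ∧ f ⬝ᵥ v = 1)
    (hQ : ∃ v f : Fin (d+1) → K, Q = vecMulVec v f ∧ f ⬝ᵥ v = 1)
    (hPQ : P * Q ≠ 0) (Y : Matrix (Fin (d+1)) (Fin (d+1)) K) :
    ∃ c : K, P * Y * Q = c • (P * Q) := by
  obtain ⟨v, f, rfl, -⟩ := hP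
  obtain ⟨x, g, rfl, -⟩ := hQ
  have h1 : ∀ Z : Matrix (Fin (d+1)) (Fin (d+1)) K, vecMulVec v f * Z * vecMulVec x g
      = (f ⬝ᵥ (Z *ᵥ x)) • vecMulVec v g := by
    intro Z
    rw [Matrix.mul_assoc, Matrix.mul_vecMulVec, Matrix.vecMulVec_mul_vecMulVec, Matrix.vecMulVec_smul]
  have h2 := h1 1
  rw [Matrix.mul_one, Matrix.one_mulVec] at h2
  have hne : f ⬝ᵥ x ≠ 0 := by
    intro h; rw [h2, h] at hPQ; simp at hPQ
  refine ⟨(f ⬝ᵥ (Y *ᵥ x)) / (f ⬝ᵥ x), ?_⟩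
  rw [h1, h2, smul_smul, div_mul_cancel₀ _ hne]

variable (L : LeonardSystem K d)

theorem rE (i) : ∃ v f : Fin (d+1) → K, L.E i = vecMulVec v f ∧ f ⬝ᵥ v = 1 :=
  aux_rank_one L.E L.E_ne L.E_mul i
theorem rEs (i) : ∃ v f : Fin (d+1) → K, L.Estar i = vecMulVec v f ∧ f ⬝ᵥ v = 1 :=
  aux_rank_one L.Estar L.Es_ne L.Es_mul i

theorem A_E (i) : L.A * L.E i = L.θ i • L.E i := by
  rw [L.A_eq, Finset.sum_mul]; simp [L.E_mul]
theorem E_A (i) : L.E i * L.A = L.θ i • L.E i := by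
  rw [L.A_eq, Finset.mul_sum]; simp [L.E_mul]
theorem As_Es (i) : L.Astar * L.Estar i = L.θs i • L.Estar i := by
  rw [L.As_eq, Finset.sum_mul]; simp [L.Es_mul]
theorem Es_As (i) : L.Estar i * L.Astar = L.θs i • L.Estar i := by
  rw [L.As_eq, Finset.mul_sum]; simp [L.Es_mul]

theorem expE (X : Matrix (Fin (d+1)) (Fin (d+1)) K) : X = ∑ i, X * L.E i := by
  rw [← Finset.mul_sum, L.E_sum, Matrix.mul_one]
theorem expEs (X : Matrix (Fin (d+1)) (Fin (d+1)) K) : X = ∑ i, X * L.Estar i := by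
  rw [← Finset.mul_sum, L.Es_sum, Matrix.mul_one]

theorem θN_coe (i : Fin (d+1)) : L.θN i = L.θ i := by
  rw [θN, dif_pos i.isLt]
theorem θsN_coe (i : Fin (d+1)) : L.θsN i = L.θs i := by
  rw [θsN, dif_pos i.isLt]

theorem tauA_E (n : ℕ) (i) : L.tauA n * L.E i = L.tauS n (L.θ i) • L.E i := by
  induction n with
  | zero => simp [tauA, tauS]
  | succ n ih =>
    rw [tauA, Matrix.mul_assoc, Matrix.sub_mul, A_E, Matrix.smul_mul, Matrix.one_mul, ← sub_smul,
      Matrix.mul_smul, ih, smul_smul, tauS, tauS, Finset.prod_range_succ, mul_comm]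
theorem etaA_E (n : ℕ) (i) : L.etaA n * L.E i = L.etaS n (L.θ i) • L.E i := by
  induction n with
  | zero => simp [etaA, etaS]
  | succ n ih =>
    rw [etaA, Matrix.mul_assoc, Matrix.sub_mul, A_E, Matrix.smul_mul, Matrix.one_mul, ← sub_smul,
      Matrix.mul_smul, ih, smul_smul, etaS, etaS, Finset.prod_range_succ, mul_comm]
theorem tausA_Es (n : ℕ) (i) : L.tausA n * L.Estar i = L.tausS n (L.θs i) • L.Estar i := by
  induction n with
  | zero => simp [tausA, tausS]
  | succ n ih =>
    rw [tausA, Matrix.mul_assoc, Matrix.sub_mul, As_Es, Matrix.smul_mul, Matrix.one_mul, ← sub_smul,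
      Matrix.mul_smul, ih, smul_smul, tausS, tausS, Finset.prod_range_succ, mul_comm]

theorem comm_A_tau (n : ℕ) : Commute L.A (L.tauA n) := by
  induction n with
  | zero => exact Commute.one_right _
  | succ n ih =>
    exact ih.mul_right ((Commute.refl _).sub_right ((Commute.one_right _).smul_right _))
theorem comm_A_eta (n : ℕ) : Commute L.A (L.etaA n) := by
  induction n with
  | zero => exact Commute.one_right _
  | succ n ih =>
    exact ih.mul_right ((Commute.refl _).sub_right ((Commute.one_right _).smul_right _))
theorem comm_As_taus (n : ℕ) : Commute L.Astar (L.tausA n) := by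
  induction n with
  | zero => exact Commute.one_right _
  | succ n ih =>
    exact ih.mul_right ((Commute.refl _).sub_right ((Commute.one_right _).smul_right _))

theorem tauS_zero {n : ℕ} {i : Fin (d+1)} (h : (i:ℕ) < n) : L.tauS n (L.θ i) = 0 := by
  apply Finset.prod_eq_zero (Finset.mem_range.mpr h)
  rw [θN_coe, sub_self]
theorem etaS_zero {n : ℕ} {i : Fin (d+1)} (h : d < n + i) : L.etaS n (L.θ i) = 0 := by
  apply Finset.prod_eq_zero (i := d - i) (Finset.mem_range.mpr (by omega))
  rw [show d - (d - (i:ℕ)) = i by omega, θN_coe, sub_self]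
theorem tausS_zero {n : ℕ} {i : Fin (d+1)} (h : (i:ℕ) < n) : L.tausS n (L.θs i) = 0 := by
  apply Finset.prod_eq_zero (Finset.mem_range.mpr h)
  rw [θsN_coe, sub_self]
theorem tauS_ne {n : ℕ} {i : Fin (d+1)} (h : n ≤ i) : L.tauS n (L.θ i) ≠ 0 := by
  apply Finset.prod_ne_zero_iff.mpr
  intro j hj
  have hj := Finset.mem_range.mp hj
  have h2 := L.θN_coe ⟨j, by omega⟩
  simp only at h2
  rw [h2, sub_ne_zero]
  intro h3
  have := congrArg Fin.val (L.θ_inj h3)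
  simp at this; omega
theorem tausS_ne {n : ℕ} {i : Fin (d+1)} (h : n ≤ i) : L.tausS n (L.θs i) ≠ 0 := by
  apply Finset.prod_ne_zero_iff.mpr
  intro j hj
  have hj := Finset.mem_range.mp hj
  have h2 := L.θsN_coe ⟨j, by omega⟩
  simp only at h2
  rw [h2, sub_ne_zero]
  intro h3
  have := congrArg Fin.val (L.θs_inj h3)
  simp at this; omega
theorem etaS_ne {n : ℕ} {i : Fin (d+1)} (h : n + i ≤ d) : L.etaS n (L.θ i) ≠ 0 := by
  apply Finset.prod_ne_zero_iff.mpr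
  intro j hj
  have hj := Finset.mem_range.mp hj
  have h2 := L.θN_coe ⟨d - j, by omega⟩
  simp only at h2
  rw [h2, sub_ne_zero]
  intro h3
  have := congrArg Fin.val (L.θ_inj h3)
  simp at this; omega

/-- support / leading component predicate -/
def Sup (Y : Matrix (Fin (d+1)) (Fin (d+1)) K) (s : ℕ) : Prop :=
  ∀ j : Fin (d+1), s < j → Y * L.Estar j = 0
def Lead (Y : Matrix (Fin (d+1)) (Fin (d+1)) K) (s : ℕ) : Prop :=
  ∀ j : Fin (d+1), (j:ℕ) = s → Y * L.Estar j ≠ 0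

theorem step_expand (Y : Matrix (Fin (d+1)) (Fin (d+1)) K) (a : K) (j : Fin (d+1)) :
    Y * (L.A - a • 1) * L.Estar j =
      ∑ k, Y * L.Estar k * (L.A * L.Estar j) - a • (Y * L.Estar j) := by
  rw [← Finset.sum_mul, ← expEs]
  simp [Matrix.mul_sub, Matrix.sub_mul, Matrix.mul_assoc]

theorem Sup_step {Y} {s : ℕ} (h : L.Sup Y s) (a : K) : L.Sup (Y * (L.A - a • 1)) (s+1) := by
  intro j hj
  rw [step_expand, h j (by omega), smul_zero, sub_zero]
  apply Finset.sum_eq_zero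
  intro k _
  by_cases hk : s < k
  · rw [h k hk, Matrix.zero_mul]
  · rw [Matrix.mul_assoc, ← Matrix.mul_assoc (L.Estar k), L.strid0 k j (by omega), Matrix.mul_zero]

theorem Lead_step {Y} {s : ℕ} (h : L.Sup Y s) (h' : L.Lead Y s) (a : K) :
    L.Lead (Y * (L.A - a • 1)) (s+1) := by
  intro j hj
  have hs : s < d + 1 := by omega
  rw [step_expand, h j (by omega), smul_zero, sub_zero, Finset.sum_eq_single ⟨s, hs⟩]
  · have h2 := h' ⟨s, hs⟩ rfl
    refine aux_sandwich (L.rEs _) _ _ h2 ?_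
    rw [← Matrix.mul_assoc]
    exact L.strid1 _ _ (by simp; omega)
  · intro k _ hks
    have hks' : (k:ℕ) ≠ s := fun h => hks (Fin.ext h)
    by_cases hk : s < k
    · rw [h k hk, Matrix.zero_mul]
    · rw [Matrix.mul_assoc, ← Matrix.mul_assoc (L.Estar k), L.strid0 k j (by omega), Matrix.mul_zero]
  · simp

theorem tau_step {Y} {s : ℕ} (h : L.Sup Y s) (h' : L.Lead Y s) (n : ℕ) :
    L.Sup (Y * L.tauA n) (s+n) ∧ L.Lead (Y * L.tauA n) (s+n) := by
  induction n with
  | zero => simpa [tauA] using ⟨h, h'⟩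
  | succ n ih =>
    rw [tauA, ← Matrix.mul_assoc, ← add_assoc]
    exact ⟨L.Sup_step ih.1 _, L.Lead_step ih.1 ih.2 _⟩
theorem eta_step {Y} {s : ℕ} (h : L.Sup Y s) (h' : L.Lead Y s) (n : ℕ) :
    L.Sup (Y * L.etaA n) (s+n) ∧ L.Lead (Y * L.etaA n) (s+n) := by
  induction n with
  | zero => simpa [etaA] using ⟨h, h'⟩
  | succ n ih =>
    rw [etaA, ← Matrix.mul_assoc, ← add_assoc]
    exact ⟨L.Sup_step ih.1 _, L.Lead_step ih.1 ih.2 _⟩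

theorem Sup0 : L.Sup (L.Estar 0) 0 := by
  intro j hj
  rw [L.Es_mul, if_neg]
  rintro rfl; simp at hj
theorem Lead0 : L.Lead (L.Estar 0) 0 := by
  intro j hj
  have : j = 0 := Fin.ext hj
  subst this
  rw [L.Es_mul, if_pos rfl]; exact L.Es_ne 0

theorem tau_eta_E (r s : ℕ) (i) : L.tauA r * L.etaA s * L.E i =
    (L.tauS r (L.θ i) * L.etaS s (L.θ i)) • L.E i := by
  rw [Matrix.mul_assoc, etaA_E, Matrix.mul_smul, tauA_E, smul_smul, mul_comm]

theorem tau_eta_eq (r : Fin (d+1)) : L.tauA r * L.etaA (d - r) =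
    (L.tauS r (L.θ r) * L.etaS (d - r) (L.θ r)) • L.E r := by
  rw [L.expE (L.tauA r * L.etaA (d - r)), Finset.sum_eq_single r, tau_eta_E]
  · intro i _ hi
    have hi' : (i:ℕ) ≠ r := fun h => hi (Fin.ext h)
    rw [tau_eta_E]
    rcases Nat.lt_or_ge i r with h | h
    · rw [L.tauS_zero h]; simp
    · rw [L.etaS_zero (by omega)]; simp
  · simp

theorem tau_eta_zero (r s : ℕ) (h : d < r + s) : L.tauA r * L.etaA s = 0 := by
  rw [L.expE (L.tauA r * L.etaA s)]
  apply Finset.sum_eq_zero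
  intro i _
  rw [tau_eta_E]
  rcases Nat.lt_or_ge i r with h | h
  · rw [L.tauS_zero h]; simp
  · rw [L.etaS_zero (by omega)]; simp

theorem Es0_E_ne (r) : L.Estar 0 * L.E r ≠ 0 := by
  intro h
  have h1 := L.tau_step L.Sup0 L.Lead0 r
  have h2 := (L.eta_step h1.1 h1.2 (d - r)).2 (Fin.last d) (by simp; omega)
  apply h2
  rw [Matrix.mul_assoc (L.Estar 0), tau_eta_eq, Matrix.mul_smul, h]; simp

theorem disjoint {Y : Matrix (Fin (d+1)) (Fin (d+1)) K} {r : ℕ}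
    (hE : ∀ i : Fin (d+1), (i:ℕ) < r → Y * L.E i = 0) (n : ℕ) (hn : n ≤ r) (hr : r ≤ d + 1)
    (hs : ∀ j : Fin (d+1), n ≤ j → Y * L.Estar j = 0) : Y = 0 := by
  induction n with
  | zero =>
    rw [L.expEs Y]
    exact Finset.sum_eq_zero fun i _ => hs i (Nat.zero_le _)
  | succ n ih =>
    by_cases h : Y * L.Estar ⟨n, by omega⟩ = 0
    · apply ih (by omega)
      intro j hj
      rcases Nat.lt_or_ge n j with h2 | h2
      · exact hs j h2
      · have : j = ⟨n, by omega⟩ := Fin.ext (by simp; omega)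
        rw [this]; exact h
    · exfalso
      have h1 : L.Sup Y n := fun j hj => hs j hj
      have h2 : L.Lead Y n := by
        intro j hj
        have : j = ⟨n, by omega⟩ := Fin.ext hj
        rw [this]; exact h
      have h3 := (L.eta_step h1 h2 (d + 1 - r)).2 ⟨n + (d + 1 - r), by omega⟩ rfl
      apply h3
      have h4 : Y * L.etaA (d+1-r) = 0 := by
        rw [L.expE (Y * L.etaA (d+1-r))]
        apply Finset.sum_eq_zero
        intro i _
        rw [Matrix.mul_assoc, etaA_E, Matrix.mul_smul]
        rcases Nat.lt_or_ge i r with h | h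
        · rw [hE i h, smul_zero]
        · rw [L.etaS_zero (by omega), zero_smul]
      rw [h4, Matrix.zero_mul]

theorem tau_As_E (r : ℕ) (i : Fin (d+1)) (h : (i:ℕ) + 1 < r) :
    L.tauA r * L.Astar * L.E i = 0 := by
  rw [L.expE (L.tauA r), Finset.sum_mul, Finset.sum_mul]
  apply Finset.sum_eq_zero
  intro k _
  rw [tauA_E]
  rcases Nat.lt_or_ge k r with h' | h'
  · rw [L.tauS_zero h']; simp
  · rw [Matrix.smul_mul, Matrix.smul_mul, L.trid0 k i (by omega), smul_zero]

theorem tau_As_E' (r i : Fin (d+1)) (h : (i:ℕ) + 1 = r) :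
    L.tauA r * L.Astar * L.E i = L.tauS r (L.θ r) • (L.E r * L.Astar * L.E i) := by
  rw [L.expE (L.tauA r), Finset.sum_mul, Finset.sum_mul, Finset.sum_eq_single r]
  · rw [tauA_E, Matrix.smul_mul, Matrix.smul_mul]
  · intro k _ hk
    have hk' : (k:ℕ) ≠ r := fun h => hk (Fin.ext h)
    rw [tauA_E]
    rcases Nat.lt_or_ge k r with h' | h'
    · rw [L.tauS_zero h']; simp
    · rw [Matrix.smul_mul, Matrix.smul_mul, L.trid0 k i (by omega), smul_zero]
  · simp

theorem split_exists (n : ℕ) (hn : n + 1 ≤ d) : ∃ k : K, k ≠ 0 ∧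
    L.Estar 0 * L.tauA (n+1) * (L.Astar - L.θsN (n+1) • 1) = k • (L.Estar 0 * L.tauA n) := by
  set i : Fin (d+1) := ⟨n, by omega⟩ with hi
  set r : Fin (d+1) := ⟨n+1, by omega⟩ with hr
  set Y := L.Estar 0 * L.tauA (n+1) * (L.Astar - L.θsN (n+1) • 1) with hY
  have hYE : ∀ j : Fin (d+1), (j:ℕ) < n + 1 →
      Y * L.E j = L.Estar 0 * (L.tauA (n+1) * L.Astar * L.E j) := by
    intro j hj
    rw [hY, Matrix.mul_sub, Matrix.sub_mul, Matrix.mul_smul, Matrix.mul_one, Matrix.smul_mul,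
      Matrix.mul_assoc _ (L.tauA (n+1)) (L.E j), tauA_E, L.tauS_zero hj]
    simp [Matrix.mul_assoc]
  have hYi : Y * L.E i = L.tauS (n+1) (L.θ r) • (L.Estar 0 * L.E r * (L.Astar * L.E i)) := by
    rw [hYE i (by simp [hi]), show n + 1 = (r:ℕ) from rfl, L.tau_As_E' r i rfl]
    simp [Matrix.mul_assoc]
  have hYi0 : Y * L.E i ≠ 0 := by
    rw [hYi]
    refine smul_ne_zero (L.tauS_ne (le_refl _)) ?_
    refine aux_sandwich (L.rE r) _ _ (L.Es0_E_ne r) ?_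
    rw [← Matrix.mul_assoc]
    exact L.trid1 _ _ (by simp [hi, hr])
  obtain ⟨c, hc⟩ := aux_prop (L.rEs 0) (L.rE i) (L.Es0_E_ne i)
    (L.tauA (n+1) * (L.Astar - L.θsN (n+1) • 1))
  rw [← Matrix.mul_assoc, ← hY] at hc
  have ht : L.tauS n (L.θ i) ≠ 0 := L.tauS_ne (le_refl _)
  refine ⟨c / L.tauS n (L.θ i), ?_, ?_⟩
  · refine div_ne_zero ?_ ht
    rintro rfl
    rw [zero_smul] at hc
    exact hYi0 hc
  · rw [← sub_eq_zero]
    have s1 := (L.tau_step L.Sup0 L.Lead0 (n+1)).1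
    have s0 := (L.tau_step L.Sup0 L.Lead0 n).1
    apply L.disjoint (r := n+1) _ (n+1) (le_refl _) (by omega)
    · intro j hj
      rw [Matrix.mul_sub] at hY
      rw [Matrix.sub_mul, Matrix.smul_mul, s0 j (by omega), smul_zero, sub_zero, hY, Matrix.sub_mul,
        Matrix.mul_assoc _ L.Astar, As_Es, Matrix.mul_smul, Matrix.mul_smul, Matrix.smul_mul,
        Matrix.mul_one, ← sub_smul]
      rcases Nat.lt_or_ge (n+1) j with h | h
      · rw [s1 j (by omega), smul_zero]
      · rw [show n + 1 = (j:ℕ) by omega, θsN_coe, sub_self, zero_smul]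
    · intro j hj
      rw [Matrix.sub_mul, Matrix.smul_mul, Matrix.mul_assoc _ (L.tauA n), tauA_E, Matrix.mul_smul,
        smul_smul]
      rcases Nat.lt_or_ge j n with h | h
      · rw [L.tauS_zero h, mul_zero, zero_smul, sub_zero, hYE j hj, L.tau_As_E _ _ (by omega),
          Matrix.mul_zero]
      · have hji : j = i := Fin.ext (by simp [hi]; omega)
        rw [hji, hc, div_mul_cancel₀ _ ht, sub_self]

theorem trace_sand (X : Matrix (Fin (d+1)) (Fin (d+1)) K) :
    (L.Estar 0 * X * L.Estar 0).trace = (X * L.Estar 0).trace := by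
  rw [Matrix.mul_assoc, Matrix.trace_mul_comm, Matrix.mul_assoc, L.Es_mul, if_pos rfl]

theorem split_trace (n : ℕ) (hn : n + 1 ≤ d) (k : K)
    (hk : L.Estar 0 * L.tauA (n+1) * (L.Astar - L.θsN (n+1) • 1) = k • (L.Estar 0 * L.tauA n)) :
    (L.θsN 0 - L.θsN (n+1)) * (L.tauA (n+1) * L.Estar 0).trace
      = k * (L.tauA n * L.Estar 0).trace := by
  have h := congrArg (fun M => (M * L.Estar 0).trace) hk
  simp only [Matrix.smul_mul, Matrix.trace_smul, trace_sand, smul_eq_mul] at h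
  rw [← h, Matrix.mul_assoc _ (_ - _), Matrix.sub_mul, As_Es, Matrix.smul_mul, Matrix.one_mul,
    ← sub_smul, Matrix.mul_smul, Matrix.trace_smul, trace_sand, ← θsN_coe, smul_eq_mul]
  simp

theorem trace_ne (n : ℕ) (hn : n ≤ d) : (L.tauA n * L.Estar 0).trace ≠ 0 := by
  induction n with
  | zero => rw [tauA, Matrix.one_mul, aux_trace (L.rEs 0)]; exact one_ne_zero
  | succ n ih =>
    obtain ⟨k, hk0, hk⟩ := L.split_exists n hn
    have h := L.split_trace n hn k hk
    intro h0
    rw [h0, mul_zero] at h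
    exact mul_ne_zero hk0 (ih (by omega)) h.symm

theorem split (n : ℕ) (hn : n + 1 ≤ d) : L.varphi (n+1) ≠ 0 ∧
    L.Estar 0 * L.tauA (n+1) * (L.Astar - L.θsN (n+1) • 1)
      = L.varphi (n+1) • (L.Estar 0 * L.tauA n) := by
  obtain ⟨k, hk0, hk⟩ := L.split_exists n hn
  have h : L.varphi (n+1) = k := by
    rw [varphi, L.split_trace n hn k hk, Nat.add_sub_cancel, mul_div_cancel_right₀ _ (L.trace_ne n (by omega))]
  rw [h]; exact ⟨hk0, hk⟩

/-- transposed system with the `E` ordering reversed -/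
def dn : LeonardSystem K d where
  A := L.Aᵀ
  Astar := L.Astarᵀ
  E i := (L.E i.rev)ᵀ
  Estar i := (L.Estar i)ᵀ
  θ i := L.θ i.rev
  θs := L.θs
  θ_inj := L.θ_inj.comp Fin.rev_injective
  θs_inj := L.θs_inj
  E_ne i := by simpa using L.E_ne i.rev
  Es_ne i := by simpa using L.Es_ne i
  E_mul i j := by
    rw [← Matrix.transpose_mul, L.E_mul]
    by_cases h : i = j
    · simp [h]
    · simp [h, Ne.symm h]
  Es_mul i j := by
    rw [← Matrix.transpose_mul, L.Es_mul]
    by_cases h : i = j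
    · simp [h]
    · simp [h, Ne.symm h]
  E_sum := by
    rw [← Matrix.transpose_sum, ← Matrix.transpose_one, ← L.E_sum]
    congr 1
    exact Equiv.sum_comp Fin.revPerm L.E
  Es_sum := by
    rw [← Matrix.transpose_sum, L.Es_sum, Matrix.transpose_one]
  A_eq := by
    rw [L.A_eq, Matrix.transpose_sum, ← Equiv.sum_comp Fin.revPerm]
    simp [Matrix.transpose_smul]
  As_eq := by
    rw [L.As_eq, Matrix.transpose_sum]
    simp [Matrix.transpose_smul]
  trid0 i j h := by
    rw [← Matrix.transpose_mul, ← Matrix.transpose_mul, ← Matrix.mul_assoc, L.trid0, Matrix.transpose_zero]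
    simp only [Fin.val_rev]; omega
  trid1 i j h := by
    rw [← Matrix.transpose_mul, ← Matrix.transpose_mul, ← Matrix.mul_assoc, Ne, Matrix.transpose_eq_zero]
    apply L.trid1
    simp only [Fin.val_rev]; omega
  strid0 i j h := by
    rw [← Matrix.transpose_mul, ← Matrix.transpose_mul, ← Matrix.mul_assoc, L.strid0, Matrix.transpose_zero]
    omega
  strid1 i j h := by
    rw [← Matrix.transpose_mul, ← Matrix.transpose_mul, ← Matrix.mul_assoc, Ne, Matrix.transpose_eq_zero]
    apply L.strid1
    omega

theorem dn_θN (n : ℕ) (h : n ≤ d) : L.dn.θN n = L.θN (d - n) := by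
  rw [θN, θN, dif_pos (by omega), dif_pos (by omega)]
  simp only [dn]
  congr 1
  ext; simp
theorem dn_θsN (n : ℕ) : L.dn.θsN n = L.θsN n := rfl

theorem dn_tau (n : ℕ) (h : n ≤ d + 1) : L.dn.tauA n = (L.etaA n)ᵀ := by
  induction n with
  | zero => simp [tauA, etaA]
  | succ n ih =>
    have hc : L.etaA (n+1) = (L.A - L.θN (d - n) • 1) * L.etaA n := by
      rw [etaA]
      exact (((L.comm_A_eta n).sub_left ((Commute.one_left _).smul_left _)).eq).symm
    rw [hc, tauA, ih (by omega), Matrix.transpose_mul, dn_θN _ _ (by omega)]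
    simp [dn]

theorem dn_trace (n : ℕ) (h : n ≤ d + 1) :
    (L.dn.tauA n * L.dn.Estar 0).trace = (L.etaA n * L.Estar 0).trace := by
  rw [dn_tau _ _ h]
  simp only [dn]
  rw [← Matrix.transpose_mul, Matrix.trace_transpose, Matrix.trace_mul_comm]

theorem dn_varphi (n : ℕ) (h : n ≤ d + 1) : L.dn.varphi n = L.phi n := by
  rw [varphi, phi, dn_trace _ _ h, dn_trace _ _ (by omega)]; rfl

theorem split' (n : ℕ) (hn : n + 1 ≤ d) :
    (L.Astar - L.θsN (n+1) • 1) * (L.etaA (n+1) * L.Estar 0)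
      = L.phi (n+1) • (L.etaA n * L.Estar 0) := by
  have h := (L.dn.split n hn).2
  rw [dn_varphi _ _ (by omega), dn_tau _ _ (by omega), dn_tau _ _ (by omega), dn_θsN] at h
  have h' := congrArg Matrix.transpose h
  simpa [dn, Matrix.transpose_mul] using h'

theorem E_Es0_ne (r) : L.E r * L.Estar 0 ≠ 0 := by
  have h := L.dn.Es0_E_ne r.rev
  simp only [dn, Fin.rev_rev] at h
  rwa [← Matrix.transpose_mul, Ne, Matrix.transpose_eq_zero] at h

/-- F recursion -/
theorem F_rec (n : ℕ) (hn : n + 1 ≤ d) :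
    L.varphi (n+1) • (L.Estar 0 * (L.tauA n * L.etaA (d - n)) * L.Estar 0) =
    L.phi (d - n) • (L.Estar 0 * (L.tauA (n+1) * L.etaA (d - (n+1))) * L.Estar 0) := by
  obtain ⟨m, hm⟩ : ∃ m, d - n = m + 1 := ⟨d - n - 1, by omega⟩
  have h1 := congrArg (fun M => M * (L.etaA (m+1) * L.Estar 0)) (L.split n hn).2
  have h2 := congrArg (fun M => L.Estar 0 * L.tauA (n+1) * M) (L.split' m (by omega))
  have hz := L.tau_eta_zero (n+1) (m+1) (by omega)
  have hz' : ∀ a : K, L.Estar 0 * L.tauA (n+1) * (a • (1 : Matrix (Fin (d+1)) (Fin (d+1)) K)) *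
      (L.etaA (m+1) * L.Estar 0) = 0 := by
    intro a
    rw [Matrix.mul_smul, Matrix.mul_one, Matrix.smul_mul, Matrix.mul_assoc,
      ← Matrix.mul_assoc (L.tauA (n+1)), hz]; simp
  rw [← Matrix.mul_assoc] at h2
  rw [Matrix.mul_sub, Matrix.sub_mul, hz', sub_zero] at h1 h2
  rw [hm, show d - (n+1) = m by omega]
  have h3 := h1.symm.trans h2
  simpa [Matrix.mul_assoc] using h3

theorem F_ne (r : Fin (d+1)) : L.Estar 0 * (L.tauA r * L.etaA (d - r)) * L.Estar 0 ≠ 0 := by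
  rw [tau_eta_eq, Matrix.mul_smul, Matrix.smul_mul]
  refine smul_ne_zero (mul_ne_zero (L.tauS_ne (le_refl _)) (L.etaS_ne (by omega))) ?_
  exact aux_sandwich (L.rE r) _ _ (L.Es0_E_ne r) (L.E_Es0_ne r)

/-- lower support -/
def Inf (Y : Matrix (Fin (d+1)) (Fin (d+1)) K) (s : ℕ) : Prop :=
  ∀ j : Fin (d+1), (j:ℕ) + s < d → Y * L.Estar j = 0

theorem Inf_step {Y} {s : ℕ} (h : L.Inf Y s) (a : K) : L.Inf (Y * (L.A - a • 1)) (s+1) := by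
  intro j hj
  rw [step_expand, h j (by omega), smul_zero, sub_zero]
  apply Finset.sum_eq_zero
  intro k _
  by_cases hk : (k:ℕ) + s < d
  · rw [h k hk, Matrix.zero_mul]
  · rw [Matrix.mul_assoc, ← Matrix.mul_assoc (L.Estar k), L.strid0 k j (by omega), Matrix.mul_zero]

theorem Inf_tau {Y} {s : ℕ} (h : L.Inf Y s) (n : ℕ) : L.Inf (Y * L.tauA n) (s+n) := by
  induction n with
  | zero => simpa [tauA] using h
  | succ n ih => rw [tauA, ← Matrix.mul_assoc, ← add_assoc]; exact L.Inf_step ih _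
theorem Inf_eta {Y} {s : ℕ} (h : L.Inf Y s) (n : ℕ) : L.Inf (Y * L.etaA n) (s+n) := by
  induction n with
  | zero => simpa [etaA] using h
  | succ n ih => rw [etaA, ← Matrix.mul_assoc, ← add_assoc]; exact L.Inf_step ih _

theorem Q_rec (n : ℕ) (hn : n + 1 ≤ d) :
    L.Estar (Fin.last d) * (L.tauA n * L.etaA (d - n)) * L.Estar 0 =
    L.Estar (Fin.last d) * (L.tauA (n+1) * L.etaA (d - (n+1))) * L.Estar 0 := by
  obtain ⟨m, hm⟩ : ∃ m, d - n = m + 1 := ⟨d - n - 1, by omega⟩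
  rw [hm, show d - (n+1) = m by omega]
  have h0 : L.Inf (L.Estar (Fin.last d)) 0 := by
    intro j hj
    rw [L.Es_mul, if_neg]
    rintro rfl; simp at hj
  have h1 := L.Inf_eta (L.Inf_tau h0 n) m 0 (by simp; omega)
  have e1 : L.tauA n * L.etaA (m+1) = L.tauA n * L.etaA m * L.A - L.θN (d-m) • (L.tauA n * L.etaA m) := by
    rw [etaA]; simp [Matrix.mul_sub, Matrix.mul_assoc]
  have e2 : L.tauA (n+1) * L.etaA m = L.tauA n * L.etaA m * L.A - L.θN n • (L.tauA n * L.etaA m) := by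
    rw [tauA, Matrix.mul_assoc, Matrix.sub_mul, (L.comm_A_eta m).eq]
    simp [Matrix.mul_sub, Matrix.mul_assoc]
  rw [Matrix.mul_assoc (L.Estar (Fin.last d))] at h1
  rw [e1, e2, Matrix.mul_sub, Matrix.sub_mul, Matrix.mul_sub, Matrix.sub_mul, Matrix.mul_smul,
    Matrix.smul_mul, h1, Matrix.mul_smul, Matrix.smul_mul, h1]
  simp

theorem taus_succ (n : ℕ) : L.tausA (n+1) = (L.Astar - L.θsN n • 1) * L.tausA n := by
  rw [tausA]
  exact (((L.comm_As_taus n).sub_left ((Commute.one_left _).smul_left _)).eq).symm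

theorem E_taus_E0 (n : ℕ) : ∀ k : Fin (d+1), n < k → L.E k * L.tausA n * L.E 0 = 0 := by
  induction n with
  | zero =>
    intro k hk
    rw [tausA, Matrix.mul_one, L.E_mul, if_neg]
    rintro rfl; simp at hk
  | succ n ih =>
    intro k hk
    rw [taus_succ, Matrix.sub_mul, Matrix.mul_sub, Matrix.sub_mul, Matrix.smul_mul, Matrix.one_mul,
      Matrix.mul_smul, Matrix.smul_mul, ih k (by omega), smul_zero, sub_zero, ← Matrix.mul_assoc,
      L.expE (L.E k * L.Astar), Finset.sum_mul, Finset.sum_mul]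
    apply Finset.sum_eq_zero
    intro j _
    by_cases h : n < j
    · have h2 : L.E k * L.Astar * L.E j * L.tausA n * L.E 0
          = L.E k * L.Astar * (L.E j * L.tausA n * L.E 0) := by simp only [Matrix.mul_assoc]
      rw [h2, ih j h, Matrix.mul_zero]
    · rw [L.trid0 k j (by omega)]; simp

theorem tau_taus_E0 (n : ℕ) : L.tauA (n+1) * (L.tausA n * L.E 0) = 0 := by
  rw [L.expE (L.tauA (n+1)), Finset.sum_mul]
  apply Finset.sum_eq_zero
  intro k _
  rw [tauA_E, Matrix.smul_mul, ← Matrix.mul_assoc]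
  rcases Nat.lt_or_ge n k with h | h
  · rw [E_taus_E0 _ _ _ h, smul_zero]
  · rw [L.tauS_zero (by omega), zero_smul]

theorem G (n : ℕ) (hn : n ≤ d) :
    L.Estar 0 * L.tauA n * (L.tausA n * L.E 0) = L.varphiProd n • (L.Estar 0 * L.E 0) := by
  induction n with
  | zero => simp [tauA, tausA, varphiProd]
  | succ n ih =>
    have h1 := congrArg (fun M => M * (L.tausA n * L.E 0)) (L.split n hn).2
    have hz : ∀ a : K, L.Estar 0 * L.tauA (n+1) * (a • (1 : Matrix (Fin (d+1)) (Fin (d+1)) K)) *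
        (L.tausA n * L.E 0) = 0 := by
      intro a
      rw [Matrix.mul_smul, Matrix.mul_one, Matrix.smul_mul, Matrix.mul_assoc, tau_taus_E0]; simp
    rw [Matrix.mul_sub, Matrix.sub_mul, hz, sub_zero, Matrix.smul_mul, ih (by omega), smul_smul] at h1
    rw [varphiProd, Finset.prod_range_succ, mul_comm]
    rw [varphiProd] at h1
    rw [← h1, taus_succ, Matrix.mul_assoc (_ - _), ← Matrix.mul_assoc, Matrix.mul_sub, Matrix.sub_mul, hz,
      sub_zero]

theorem tau_d : L.tauA d = L.tauS d (L.θ (Fin.last d)) • L.E (Fin.last d) := by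
  rw [L.expE (L.tauA d), Finset.sum_eq_single (Fin.last d), tauA_E]
  · intro i _ hi
    have hi' : (i:ℕ) ≠ d := fun h => hi (Fin.ext h)
    rw [tauA_E, L.tauS_zero (by omega), zero_smul]
  · simp
theorem taus_d : L.tausA d = L.tausS d (L.θs (Fin.last d)) • L.Estar (Fin.last d) := by
  rw [L.expEs (L.tausA d), Finset.sum_eq_single (Fin.last d), tausA_Es]
  · intro i _ hi
    have hi' : (i:ℕ) ≠ d := fun h => hi (Fin.ext h)
    rw [tausA_Es, L.tausS_zero (by omega), zero_smul]
  · simp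

theorem base : L.Estar 0 * L.E (Fin.last d) * L.Estar (Fin.last d) * L.E 0 =
    (L.varphiProd d / (L.tauS d (L.θ (Fin.last d)) * L.tausS d (L.θs (Fin.last d)))) •
      (L.Estar 0 * L.E 0) := by
  have h := L.G d (le_refl _)
  have h1 : L.tauS d (L.θ (Fin.last d)) ≠ 0 := L.tauS_ne (by simp)
  have h2 : L.tausS d (L.θs (Fin.last d)) ≠ 0 := L.tausS_ne (by simp)
  rw [tau_d, taus_d, Matrix.smul_mul, Matrix.mul_smul, Matrix.mul_smul, Matrix.smul_mul, smul_smul,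
    ← Matrix.mul_assoc] at h
  rw [div_eq_inv_mul, mul_smul, ← h, smul_smul, mul_comm (L.tauS d _),
    inv_mul_cancel₀ (mul_ne_zero h2 h1), one_smul]

theorem main_nat (n : ℕ) : ∀ (hn : n < d + 1),
    L.Estar 0 * L.E (Fin.last d) * L.Estar (Fin.last d) * L.E ⟨n, hn⟩ =
        (L.varphiProd d / (L.tauS d (L.θ (Fin.last d)) * L.tausS d (L.θs (Fin.last d))) *
          (L.phiRevProd n / L.varphiProd n)) • (L.Estar 0 * L.E ⟨n, hn⟩) := by
  have key : ∀ (r : Fin (d+1)) (c : K),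
      L.Estar 0 * L.E (Fin.last d) * L.Estar (Fin.last d) * L.E r = c • (L.Estar 0 * L.E r) →
      L.Estar 0 * L.E (Fin.last d) *
        (L.Estar (Fin.last d) * (L.tauA r * L.etaA (d - r)) * L.Estar 0) =
      c • (L.Estar 0 * (L.tauA r * L.etaA (d - r)) * L.Estar 0) := by
    intro r c h
    have h' := congrArg (fun M => M * L.Estar 0) h
    simp only [Matrix.smul_mul, Matrix.mul_assoc] at h'
    rw [tau_eta_eq]
    simp only [Matrix.mul_smul, Matrix.smul_mul, Matrix.mul_assoc]
    rw [h', smul_comm]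
  induction n with
  | zero =>
    intro hn
    have := L.base
    simpa [phiRevProd, varphiProd] using this
  | succ n ih =>
    intro hn
    have h0 := key _ _ (ih (by omega))
    obtain ⟨c, hc⟩ := aux_prop (L.rEs 0) (L.rE ⟨n+1, hn⟩) (L.Es0_E_ne _)
      (L.E (Fin.last d) * L.Estar (Fin.last d))
    rw [← Matrix.mul_assoc] at hc
    have h1 := key ⟨n+1, hn⟩ _ hc
    have hF := L.F_ne ⟨n+1, hn⟩
    have hrec := L.F_rec n (by omega)
    have hv := (L.split n (by omega)).1
    simp only at h0 h1 hF
    rw [L.Q_rec n (by omega), h1] at h0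
    have h2 := congrArg (fun M => L.varphi (n+1) • M) h0
    rw [smul_comm (L.varphi (n+1)) (_ * (_ / _)), hrec, smul_smul, smul_smul] at h2
    have h3 := smul_left_injective K hF h2
    rw [hc]
    congr 1
    have e1 : L.phiRevProd (n+1) = L.phiRevProd n * L.phi (d - n) := Finset.prod_range_succ _ _
    have e2 : L.varphiProd (n+1) = L.varphiProd n * L.varphi (n+1) := Finset.prod_range_succ _ _
    rw [e1, e2, mul_div_mul_comm, ← mul_assoc, ← mul_div_assoc]
    rw [← h3, mul_div_cancel_left₀ _ hv]

end aux

end LeonardSystem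

/-- `E*_0 E_d E*_d E_r = (φ/(τ_d(θ_d)τ*_d(θ*_d))) ⬝ (ϕ_d⋯ϕ_{d-r+1})/(φ_1⋯φ_r) ⬝ E*_0 E_r`. -/
theorem LeonardSystem.simplify_Es0EdEsdEr {K : Type*} [Field K] {d : ℕ}
    (L : LeonardSystem K d) :
    ∀ r : Fin (d+1),
      L.Estar 0 * L.E (Fin.last d) * L.Estar (Fin.last d) * L.E r =
        (L.varphiProd d / (L.tauS d (L.θ (Fin.last d)) * L.tausS d (L.θs (Fin.last d))) *
          (L.phiRevProd (r : ℕ) / L.varphiProd (r : ℕ))) • (L.Estar 0 * L.E r) := by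
  intro r
  exact L.main_nat r r.isLt
end

section
/- Let Φ be a Leonard system with parameter array ({θ_i}; {θ*_i}; {φ_i}; {ϕ_i}). Then for 0 ≤ r ≤ d, tr(E_r E*_0) = (φ_1 ⋯ φ_r · ϕ_1 ⋯ ϕ_{d−r}) / (η*_d(θ*_0) τ_r(θ_r) η_{d−r}(θ_r)). -/
open Matrix Polynomial

namespace LeonardSystem

section aux

variable {K : Type*} [Field K] {d : ℕ}

lemma rank_one_decomp {n : ℕ} (F : Fin n → Matrix (Fin n) (Fin n) K)
    (F_ne : ∀ i, F i ≠ 0) (F_mul : ∀ i j, F i * F j = if i = j then F i else 0) (i : Fin n) :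
    ∃ w v : Fin n → K, F i = vecMulVec w v ∧ v ⬝ᵥ w = 1 ∧ w ≠ 0 ∧ F i *ᵥ w = w := by
  have h1 : ∀ i, ∃ x, F i *ᵥ x ≠ 0 := by
    intro i
    by_contra! h
    exact F_ne i (Matrix.ext_of_mulVec_single fun j => by rw [h, Matrix.zero_mulVec])
  choose x hx using h1
  set w : Fin n → Fin n → K := fun i => F i *ᵥ x i with hw
  have hFw : ∀ i j, F i *ᵥ w j = if i = j then w i else 0 := by
    intro i j
    simp only [hw, Matrix.mulVec_mulVec, F_mul]
    split_ifs with h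
    · subst h; rfl
    · simp
  have hli : LinearIndependent K w := by
    rw [Fintype.linearIndependent_iff]
    intro g hg i
    have := congrArg (fun y => F i *ᵥ y) hg
    simp only [Matrix.mulVec_sum, Matrix.mulVec_smul, hFw, Matrix.mulVec_zero] at this
    simpa [hx, hw] using this
  have hsp : ⊤ ≤ Submodule.span K (Set.range w) := by
    rw [hli.span_eq_top_of_card_eq_finrank' (by simp)]
  let b := Module.Basis.mk hli hsp
  have hb : ∀ i, b i = w i := fun i => by simp [b]
  have key : ∀ y, F i *ᵥ y = b.repr y i • w i := by
    intro y
    conv_lhs => rw [← b.sum_repr y]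
    simp [Matrix.mulVec_sum, Matrix.mulVec_smul, hb, hFw]
  have hv : F i = vecMulVec (w i) (fun j => b.repr (Pi.single j 1) i) := by
    apply Matrix.ext_of_mulVec_single
    intro j
    rw [key]
    ext k
    simp [vecMulVec_apply, mul_comm]
  refine ⟨w i, fun j => b.repr (Pi.single j 1) i, hv, ?_, hx i, by simp [hFw]⟩
  have h3 : F i *ᵥ w i = w i := by simp [hFw]
  rw [hv, vecMulVec_mulVec] at h3
  obtain ⟨k, hk⟩ := Function.ne_iff.mp (hx i)
  have h4 := congrFun h3 k
  simp only [Pi.smul_apply, MulOpposite.smul_eq_mul_unop, MulOpposite.unop_op] at h4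
  exact mul_left_cancel₀ hk (by simpa using h4)

/-- The dual system. -/
def dualL (L : LeonardSystem K d) : LeonardSystem K d where
  A := L.Astar
  Astar := L.A
  E := L.Estar
  Estar := L.E
  θ := L.θs
  θs := L.θ
  θ_inj := L.θs_inj
  θs_inj := L.θ_inj
  E_ne := L.Es_ne
  Es_ne := L.E_ne
  E_mul := L.Es_mul
  Es_mul := L.E_mul
  E_sum := L.Es_sum
  Es_sum := L.E_sum
  A_eq := L.As_eq
  As_eq := L.A_eq
  trid0 := L.strid0
  trid1 := L.strid1
  strid0 := L.trid0
  strid1 := L.trid1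

/-- The transposed system. -/
def transL (L : LeonardSystem K d) : LeonardSystem K d where
  A := L.Aᵀ
  Astar := L.Astarᵀ
  E := fun i => (L.E i)ᵀ
  Estar := fun i => (L.Estar i)ᵀ
  θ := L.θ
  θs := L.θs
  θ_inj := L.θ_inj
  θs_inj := L.θs_inj
  E_ne := fun i => by simpa using L.E_ne i
  Es_ne := fun i => by simpa using L.Es_ne i
  E_mul := fun i j => by
    rw [← Matrix.transpose_mul, L.E_mul]
    split_ifs with h1 h2 h2
    · rw [h1]
    · exact absurd h1.symm h2
    · exact absurd h2.symm h1
    · simp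
  Es_mul := fun i j => by
    rw [← Matrix.transpose_mul, L.Es_mul]
    split_ifs with h1 h2 h2
    · rw [h1]
    · exact absurd h1.symm h2
    · exact absurd h2.symm h1
    · simp
  E_sum := by rw [← Matrix.transpose_sum, L.E_sum, Matrix.transpose_one]
  Es_sum := by rw [← Matrix.transpose_sum, L.Es_sum, Matrix.transpose_one]
  A_eq := by rw [L.A_eq, Matrix.transpose_sum]; simp
  As_eq := by rw [L.As_eq, Matrix.transpose_sum]; simp
  trid0 := fun i j h => by
    rw [← Matrix.transpose_mul, ← Matrix.transpose_mul, ← mul_assoc, L.trid0 j i (by omega)]; simp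
  trid1 := fun i j h => by
    rw [← Matrix.transpose_mul, ← Matrix.transpose_mul, ← mul_assoc, Ne, Matrix.transpose_eq_zero]
    exact L.trid1 j i (by omega)
  strid0 := fun i j h => by
    rw [← Matrix.transpose_mul, ← Matrix.transpose_mul, ← mul_assoc, L.strid0 j i (by omega)]; simp
  strid1 := fun i j h => by
    rw [← Matrix.transpose_mul, ← Matrix.transpose_mul, ← mul_assoc, Ne, Matrix.transpose_eq_zero]
    exact L.strid1 j i (by omega)

/-- The system with the ordering of the `E i` reversed. -/
def revL (L : LeonardSystem K d) : LeonardSystem K d where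
  A := L.A
  Astar := L.Astar
  E := fun i => L.E i.rev
  Estar := L.Estar
  θ := fun i => L.θ i.rev
  θs := L.θs
  θ_inj := L.θ_inj.comp Fin.rev_injective
  θs_inj := L.θs_inj
  E_ne := fun i => L.E_ne _
  Es_ne := L.Es_ne
  E_mul := fun i j => by simp [L.E_mul]
  Es_mul := L.Es_mul
  E_sum := by rw [← L.E_sum]; exact Equiv.sum_comp Fin.revPerm L.E
  Es_sum := L.Es_sum
  A_eq := by rw [L.A_eq]; exact (Equiv.sum_comp Fin.revPerm (fun i => L.θ i • L.E i)).symm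
  As_eq := L.As_eq
  trid0 := fun i j h => L.trid0 _ _ (by simp only [Fin.val_rev]; omega)
  trid1 := fun i j h => L.trid1 _ _ (by simp only [Fin.val_rev]; omega)
  strid0 := L.strid0
  strid1 := L.strid1

lemma E_mul_A (L : LeonardSystem K d) (j) : L.E j * L.A = L.θ j • L.E j := by
  rw [L.A_eq, Finset.mul_sum]
  simp [L.E_mul]

lemma E_mul_aeval (L : LeonardSystem K d) (j) (p : K[X]) :
    L.E j * aeval L.A p = p.eval (L.θ j) • L.E j := by
  induction p using Polynomial.induction_on' with
  | add p q hp hq => simp [mul_add, hp, hq, add_smul]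
  | monomial n a =>
    simp only [aeval_monomial, eval_monomial]
    induction n with
    | zero => simp [Algebra.algebraMap_eq_smul_one]
    | succ n ih =>
      rw [pow_succ, ← mul_assoc (algebraMap K _ a), ← mul_assoc, ih, smul_mul_assoc, E_mul_A, smul_smul]
      ring_nf

lemma aeval_eq (L : LeonardSystem K d) (p : K[X]) :
    aeval L.A p = ∑ j, p.eval (L.θ j) • L.E j := by
  rw [← one_mul (aeval L.A p), ← L.E_sum, Finset.sum_mul]
  simp [E_mul_aeval]

/-- `τ_i` as a polynomial. -/
noncomputable def tauP (L : LeonardSystem K d) (i : ℕ) : K[X] :=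
  ∏ j ∈ Finset.range i, (X - C (L.θN j))

lemma tauA_eq (L : LeonardSystem K d) (i : ℕ) : L.tauA i = aeval L.A (L.tauP i) := by
  induction i with
  | zero => simp [tauA, tauP]
  | succ i ih =>
    simp [tauA, ih, tauP, Finset.prod_range_succ, Algebra.algebraMap_eq_smul_one]

/-- `η_i` as a polynomial. -/
noncomputable def etaP (L : LeonardSystem K d) (i : ℕ) : K[X] :=
  ∏ j ∈ Finset.range i, (X - C (L.θN (d - j)))

lemma etaA_eq (L : LeonardSystem K d) (i : ℕ) : L.etaA i = aeval L.A (L.etaP i) := by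
  induction i with
  | zero => simp [etaA, etaP]
  | succ i ih =>
    simp [etaA, ih, etaP, Finset.prod_range_succ, Algebra.algebraMap_eq_smul_one]

lemma θN_val (L : LeonardSystem K d) (i : Fin (d+1)) : L.θN i = L.θ i := by
  rw [θN, dif_pos i.2]

lemma θsN_val (L : LeonardSystem K d) (i : Fin (d+1)) : L.θsN i = L.θs i := by
  rw [θsN, dif_pos i.2]

lemma θN_ne (L : LeonardSystem K d) {i j : ℕ} (hi : i ≤ d) (hj : j ≤ d) (h : i ≠ j) :
    L.θN i ≠ L.θN j := by
  simp only [θN, show i < d+1 by omega, show j < d+1 by omega, dif_pos]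
  intro h'
  exact h (by simpa using L.θ_inj h')

lemma θsN_ne (L : LeonardSystem K d) {i j : ℕ} (hi : i ≤ d) (hj : j ≤ d) (h : i ≠ j) :
    L.θsN i ≠ L.θsN j := by
  simp only [θsN, show i < d+1 by omega, show j < d+1 by omega, dif_pos]
  intro h'
  exact h (by simpa using L.θs_inj h')

lemma tauP_monic (L : LeonardSystem K d) (i : ℕ) : (L.tauP i).Monic :=
  monic_prod_of_monic _ _ fun _ _ => monic_X_sub_C _

lemma tauP_degree (L : LeonardSystem K d) (i : ℕ) : (L.tauP i).degree = i := by
  simp [tauP, degree_prod]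

lemma tauP_eval_zero (L : LeonardSystem K d) {i j : ℕ} (h : j < i) :
    (L.tauP i).eval (L.θN j) = 0 := by
  rw [tauP, eval_prod]
  exact Finset.prod_eq_zero (Finset.mem_range.2 h) (by simp)

lemma tauP_eval_ne (L : LeonardSystem K d) {i j : ℕ} (h : i ≤ j) (hj : j ≤ d) :
    (L.tauP i).eval (L.θN j) ≠ 0 := by
  rw [tauP, eval_prod, Finset.prod_ne_zero_iff]
  intro k hk
  have := Finset.mem_range.1 hk
  simpa [sub_eq_zero] using L.θN_ne hj (by omega) (by omega)

/-- uniqueness of `τ_n` -/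
lemma eq_C_mul_tauP (L : LeonardSystem K d) {n : ℕ} (hn : n ≤ d) (p : K[X])
    (hp : p.degree < ((n + 1 : ℕ) : WithBot ℕ))
    (h : ∀ j < n, p.eval (L.θN j) = 0) : ∃ c, p = C c * L.tauP n := by
  refine ⟨p.coeff n, ?_⟩
  rw [← sub_eq_zero]
  apply Polynomial.eq_zero_of_degree_lt_of_eval_index_eq_zero (v := L.θN) (Finset.range n)
  · intro a ha b hb hab
    by_contra hne
    have ha' := Finset.mem_range.1 ha
    have hb' := Finset.mem_range.1 hb
    exact L.θN_ne (by omega) (by omega) hne hab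
  · rw [Finset.card_range, Polynomial.degree_lt_iff_coeff_zero]
    intro m hm
    rw [coeff_sub, coeff_C_mul]
    rcases hm.eq_or_lt with rfl | hm
    · have := L.tauP_monic n
      have h2 : (L.tauP n).natDegree = n := natDegree_eq_of_degree_eq_some (L.tauP_degree n)
      rw [Monic, leadingCoeff, h2] at this
      simp [this]
    · rw [(Polynomial.degree_lt_iff_coeff_zero _ _).1 hp m (by omega),
        coeff_eq_zero_of_degree_lt (p := L.tauP n) (n := m) (by rw [tauP_degree]; exact_mod_cast hm)]
      simp
  · intro j hj
    have hj' := Finset.mem_range.1 hj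
    simp [h j hj', L.tauP_eval_zero hj']

/-! Krylov facts, with `u` spanning the image of `Estar 0`. -/

lemma Es_A_pow_zero (L : LeonardSystem K d) {u : Fin (d+1) → K} (hu : L.Estar 0 *ᵥ u = u)
    (k : ℕ) : ∀ j : Fin (d+1), k < j → L.Estar j *ᵥ (L.A ^ k *ᵥ u) = 0 := by
  induction k with
  | zero =>
    intro j hj
    rw [← hu]
    have : j ≠ 0 := by rintro rfl; simp at hj
    simp [L.Es_mul, this]
  | succ k ih =>
    intro j hj
    have h1 : L.A ^ k *ᵥ u = ∑ i, L.Estar i *ᵥ (L.A ^ k *ᵥ u) := by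
      rw [← Matrix.sum_mulVec, L.Es_sum, Matrix.one_mulVec]
    rw [pow_succ', ← Matrix.mulVec_mulVec, h1, Matrix.mulVec_sum, Matrix.mulVec_sum]
    apply Finset.sum_eq_zero
    intro i _
    by_cases hi : k < i
    · rw [ih i hi]; simp
    · have h2 := L.strid0 j i (by omega)
      have h3 : L.Estar i *ᵥ (L.A ^ k *ᵥ u) = L.Estar i *ᵥ (L.Estar i *ᵥ (L.A ^ k *ᵥ u)) := by
        rw [Matrix.mulVec_mulVec (L.A ^ k *ᵥ u), L.Es_mul]; simp
      rw [Matrix.mulVec_mulVec _ L.A, Matrix.mulVec_mulVec _ (L.Estar j), ← mul_assoc, h2]; simp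

lemma Es_A_pow_ne (L : LeonardSystem K d) {u : Fin (d+1) → K} (hu : L.Estar 0 *ᵥ u = u)
    (hu0 : u ≠ 0) (k : ℕ) : ∀ j : Fin (d+1), k = j → L.Estar j *ᵥ (L.A ^ k *ᵥ u) ≠ 0 := by
  induction k with
  | zero =>
    intro j hj
    have : j = 0 := Fin.ext (by simpa using hj.symm)
    subst this
    simpa [hu] using hu0
  | succ k ih =>
    intro j hj h0
    let i : Fin (d+1) := ⟨k, by omega⟩
    have h1 : L.A ^ k *ᵥ u = ∑ i, L.Estar i *ᵥ (L.A ^ k *ᵥ u) := by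
      rw [← Matrix.sum_mulVec, L.Es_sum, Matrix.one_mulVec]
    obtain ⟨w, v, hwv, hvw, hw0, hw⟩ := rank_one_decomp L.Estar L.Es_ne L.Es_mul i
    have h3 : ∀ i y, L.Estar i *ᵥ y = L.Estar i *ᵥ (L.Estar i *ᵥ y) := by
      intro i y
      rw [Matrix.mulVec_mulVec, L.Es_mul]; simp
    rw [pow_succ', ← Matrix.mulVec_mulVec, h1, Matrix.mulVec_sum, Matrix.mulVec_sum,
      Finset.sum_eq_single i] at h0
    · have h4 := ih i rfl
      rw [hwv, vecMulVec_mulVec] at h4 h0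
      have h5 : v ⬝ᵥ (L.A ^ k *ᵥ u) ≠ 0 := by
        intro h; apply h4; simp [h]
      simp only [op_smul_eq_smul, Matrix.mulVec_smul] at h0
      have h6 := (smul_eq_zero.1 h0).resolve_left h5
      apply L.strid1 j i (by simp only [i]; omega)
      rw [hwv, Matrix.mul_vecMulVec, ← Matrix.mulVec_mulVec, h6]
      simp
    · intro b _ hb
      by_cases hi : k < b
      · rw [L.Es_A_pow_zero hu k b hi]; simp
      · have h2 := L.strid0 j b (by
          have : (b : ℕ) ≠ k := fun h => hb (Fin.ext h)
          omega)
        rw [Matrix.mulVec_mulVec _ L.A, Matrix.mulVec_mulVec _ (L.Estar j), ← mul_assoc, h2]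
        simp
    · simp

lemma Es_aeval_zero (L : LeonardSystem K d) {u : Fin (d+1) → K} (hu : L.Estar 0 *ᵥ u = u)
    (p : K[X]) (j : Fin (d+1)) (hp : p.degree < ((j : ℕ) : WithBot ℕ)) :
    L.Estar j *ᵥ (aeval L.A p *ᵥ u) = 0 := by
  rw [aeval_eq_sum_range, Matrix.sum_mulVec, Matrix.mulVec_sum]
  apply Finset.sum_eq_zero
  intro k hk
  by_cases h : k < j
  · rw [Matrix.smul_mulVec, Matrix.mulVec_smul, L.Es_A_pow_zero hu k j h, smul_zero]
  · rw [(Polynomial.degree_lt_iff_coeff_zero _ _).1 hp k (by omega)]; simp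

lemma exists_poly (L : LeonardSystem K d) {u : Fin (d+1) → K} (hu : L.Estar 0 *ᵥ u = u)
    (hu0 : u ≠ 0) (k : ℕ) : k ≤ d + 1 → ∀ x : Fin (d+1) → K,
    (∀ j : Fin (d+1), k ≤ j → L.Estar j *ᵥ x = 0) →
    ∃ p : K[X], p.degree < (k : WithBot ℕ) ∧ x = aeval L.A p *ᵥ u := by
  induction k with
  | zero =>
    intro _ x hx
    refine ⟨0, by simp, ?_⟩
    rw [← Matrix.one_mulVec x, ← L.Es_sum, Matrix.sum_mulVec]
    simp [hx]
  | succ k ih =>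
    intro hk x hx
    let i : Fin (d+1) := ⟨k, by omega⟩
    obtain ⟨w, v, hwv, hvw, hw0, hw⟩ := rank_one_decomp L.Estar L.Es_ne L.Es_mul i
    have h4 := L.Es_A_pow_ne hu hu0 k i rfl
    have h5 : v ⬝ᵥ (L.A ^ k *ᵥ u) ≠ 0 := by
      intro h; apply h4; rw [hwv, vecMulVec_mulVec]; simp [h]
    set c := v ⬝ᵥ x / v ⬝ᵥ (L.A ^ k *ᵥ u) with hc
    obtain ⟨p, hp, hpx⟩ := ih (by omega) (x - c • (L.A ^ k *ᵥ u)) (by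
      intro j hj
      rcases hj.eq_or_lt with h | h
      · have : j = i := Fin.ext h.symm
        subst this
        rw [hwv, vecMulVec_mulVec, dotProduct_sub, dotProduct_smul, hc, smul_eq_mul,
          div_mul_cancel₀ _ h5]
        simp
      · rw [Matrix.mulVec_sub, Matrix.mulVec_smul, hx j h, L.Es_A_pow_zero hu k j h]; simp)
    refine ⟨p + C c * X ^ k, ?_, ?_⟩
    · refine lt_of_le_of_lt (degree_add_le _ _) (max_lt (hp.trans (by exact_mod_cast Nat.lt_succ_self k)) ?_)
      exact lt_of_le_of_lt (degree_C_mul_X_pow_le _ _) (by exact_mod_cast Nat.lt_succ_self k)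
    · simp only [map_add, map_mul, aeval_C, map_pow, aeval_X, Matrix.add_mulVec, ← hpx,
        Algebra.algebraMap_eq_smul_one, smul_mul_assoc, one_mul, Matrix.smul_mulVec]
      simp

lemma E_u_ne (L : LeonardSystem K d) {u : Fin (d+1) → K} (hu : L.Estar 0 *ᵥ u = u)
    (hu0 : u ≠ 0) (k : Fin (d+1)) : L.E k *ᵥ u ≠ 0 := by
  intro h
  apply L.E_ne k
  apply Matrix.ext_of_mulVec_single
  intro j
  obtain ⟨p, -, hp⟩ := L.exists_poly hu hu0 (d+1) le_rfl (Pi.single j 1)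
    (fun j hj => absurd j.2 (by omega))
  rw [hp, Matrix.mulVec_mulVec, E_mul_aeval, Matrix.smul_mulVec, h]
  simp

lemma E_Es0_ne_s10 (L : LeonardSystem K d) (k : Fin (d+1)) : L.E k * L.Estar 0 ≠ 0 := by
  obtain ⟨w, v, hwv, hvw, hw0, hw⟩ := rank_one_decomp L.Estar L.Es_ne L.Es_mul 0
  intro h
  apply L.E_u_ne hw hw0 k
  rw [← hw, Matrix.mulVec_mulVec, h]; simp

lemma E0_Es_ne (L : LeonardSystem K d) (k : Fin (d+1)) : L.E 0 * L.Estar k ≠ 0 := by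
  have h := L.dualL.transL.E_Es0_ne_s10 k
  intro h0
  apply h
  change (L.Estar k)ᵀ * (L.E 0)ᵀ = 0
  rw [← Matrix.transpose_mul, h0]; simp

lemma Es_mul_As (L : LeonardSystem K d) (j) : L.Estar j * L.Astar = L.θs j • L.Estar j :=
  L.dualL.E_mul_A j

lemma E_tau_zero (L : LeonardSystem K d) (i : ℕ) (j : Fin (d+1)) (h : (j : ℕ) < i) :
    L.E j * L.tauA i = 0 := by
  rw [tauA_eq, E_mul_aeval, ← θN_val, L.tauP_eval_zero h, zero_smul]

lemma step_vec (L : LeonardSystem K d) {u : Fin (d+1) → K} (hu : L.Estar 0 *ᵥ u = u)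
    (hu0 : u ≠ 0) (i : ℕ) (hi : i + 1 ≤ d) :
    ∃ c : K, (L.Astar - L.θsN (i+1) • 1) *ᵥ (L.tauA (i+1) *ᵥ u) = c • (L.tauA i *ᵥ u) := by
  obtain ⟨p, hp, hpx⟩ := L.exists_poly hu hu0 (i+1) (by omega)
    ((L.Astar - L.θsN (i+1) • 1) *ᵥ (L.tauA (i+1) *ᵥ u)) (by
      intro j hj
      have h1 : L.Estar j * (L.Astar - L.θsN (i+1) • 1) = (L.θs j - L.θsN (i+1)) • L.Estar j := by
        rw [mul_sub, Es_mul_As, sub_smul]; simp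
      rw [Matrix.mulVec_mulVec _ (L.Estar j), h1, Matrix.smul_mulVec]
      rcases hj.eq_or_lt with h | h
      · rw [h, θsN_val]; simp
      · rw [tauA_eq, L.Es_aeval_zero hu _ j (by rw [tauP_degree]; exact_mod_cast h), smul_zero])
  obtain ⟨c, hc⟩ := L.eq_C_mul_tauP (n := i) (by omega) p hp (by
    intro j hj
    let jj : Fin (d+1) := ⟨j, by omega⟩
    have h1 : L.E jj * ((L.Astar - L.θsN (i+1) • 1) * L.tauA (i+1)) = 0 := by
      have h2 : L.tauA (i+1) = ∑ k, L.E k * L.tauA (i+1) := by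
        rw [← Finset.sum_mul, L.E_sum, one_mul]
      rw [h2, Finset.mul_sum, Finset.mul_sum]
      apply Finset.sum_eq_zero
      intro k _
      by_cases hk : (k : ℕ) < i + 1
      · rw [E_tau_zero _ _ _ hk]; simp
      · have h3 : jj ≠ k := by
          intro h; apply hk; rw [← h]; simp only [jj]; omega
        rw [← mul_assoc, ← mul_assoc, mul_sub, sub_mul, L.trid0 jj k (by simp only [jj]; omega)]
        simp [L.E_mul, h3]
    have h4 := congrArg (fun y => L.E jj *ᵥ y) hpx
    simp only [Matrix.mulVec_mulVec] at h4
    rw [← mul_assoc, mul_assoc, h1, E_mul_aeval, Matrix.zero_mulVec, Matrix.smul_mulVec] at h4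
    have h5 := (smul_eq_zero.1 h4.symm).resolve_right (L.E_u_ne hu hu0 jj)
    rwa [← θN_val] at h5)
  refine ⟨c, ?_⟩
  rw [hpx, hc, tauA_eq]
  simp [Algebra.algebraMap_eq_smul_one, Matrix.smul_mulVec]

lemma step_mat (L : LeonardSystem K d) (i : ℕ) (hi : i + 1 ≤ d) :
    ∃ c : K, (L.Astar - L.θsN (i+1) • 1) * (L.tauA (i+1) * L.Estar 0) =
      c • (L.tauA i * L.Estar 0) := by
  obtain ⟨w, v, hwv, hvw, hw0, hw⟩ := rank_one_decomp L.Estar L.Es_ne L.Es_mul 0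
  obtain ⟨c, hc⟩ := L.step_vec hw hw0 i hi
  refine ⟨c, ?_⟩
  rw [hwv, Matrix.mul_vecMulVec, Matrix.mul_vecMulVec, Matrix.mul_vecMulVec, hc,
    Matrix.smul_vecMulVec]

lemma trace_Es0 (L : LeonardSystem K d) : (L.Estar 0).trace = 1 := by
  obtain ⟨w, v, hwv, hvw, hw0, hw⟩ := rank_one_decomp L.Estar L.Es_ne L.Es_mul 0
  rw [hwv, Matrix.trace_vecMulVec, dotProduct_comm, hvw]

lemma trace_Es0_mul (L : LeonardSystem K d) (X : Matrix (Fin (d+1)) (Fin (d+1)) K) :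
    (L.Estar 0 * X * L.Estar 0).trace = (X * L.Estar 0).trace := by
  rw [mul_assoc, Matrix.trace_mul_comm, mul_assoc, L.Es_mul]; simp

lemma step_trace (L : LeonardSystem K d) (i : ℕ) (c : K)
    (h : (L.Astar - L.θsN (i+1) • 1) * (L.tauA (i+1) * L.Estar 0) =
      c • (L.tauA i * L.Estar 0)) :
    (L.θsN 0 - L.θsN (i+1)) * (L.tauA (i+1) * L.Estar 0).trace =
      c * (L.tauA i * L.Estar 0).trace := by
  have h1 : L.Estar 0 * (L.Astar - L.θsN (i+1) • 1) = (L.θsN 0 - L.θsN (i+1)) • L.Estar 0 := by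
    rw [mul_sub, Es_mul_As, sub_smul, ← θsN_val]; simp
  have h2 := congrArg (fun y => (L.Estar 0 * y).trace) h
  simp only [← mul_assoc, mul_smul_comm] at h2
  rw [h1] at h2
  simpa only [smul_mul_assoc, Matrix.trace_smul, trace_Es0_mul, smul_eq_mul] using h2

lemma trace_tau_ne (L : LeonardSystem K d) (i : ℕ) : i ≤ d → (L.tauA i * L.Estar 0).trace ≠ 0 := by
  induction i with
  | zero => intro _; simp [tauA, trace_Es0]
  | succ i ih =>
    intro hi h0
    obtain ⟨c, hc⟩ := L.step_mat i hi
    have h1 := L.step_trace i c hc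
    rw [h0, mul_zero] at h1
    have hc0 : c = 0 := (mul_eq_zero.1 h1.symm).resolve_right (ih (by omega))
    rw [hc0, zero_smul] at hc
    let k : Fin (d+1) := ⟨i+1, by omega⟩
    obtain ⟨u, v, huv, hvu, hu0, hu⟩ := rank_one_decomp L.Estar L.Es_ne L.Es_mul 0
    obtain ⟨w, v', hwv, hvw, hw0, hw⟩ := rank_one_decomp L.Estar L.Es_ne L.Es_mul k
    set x := L.tauA (i+1) *ᵥ u with hx
    have hcx : (L.Astar - L.θsN (i+1) • 1) *ᵥ x = 0 := by
      have := congrArg (fun M => M *ᵥ u) hc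
      simpa only [← Matrix.mulVec_mulVec, hu, Matrix.zero_mulVec] using this
    have hxk : x = L.Estar k *ᵥ x := by
      conv_lhs => rw [← Matrix.one_mulVec x, ← L.Es_sum, Matrix.sum_mulVec]
      apply Finset.sum_eq_single k
      · intro j _ hj
        have h1 : L.Estar j * (L.Astar - L.θsN (i+1) • 1) =
            (L.θs j - L.θsN (i+1)) • L.Estar j := by
          rw [mul_sub, Es_mul_As, sub_smul]; simp
        have h2 := congrArg (fun y => L.Estar j *ᵥ y) hcx
        simp only [Matrix.mulVec_mulVec, h1, Matrix.mulVec_zero, Matrix.smul_mulVec] at h2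
        refine (smul_eq_zero.1 h2).resolve_left ?_
        rw [← θsN_val, sub_eq_zero]
        exact L.θsN_ne (by omega) hi (fun h => hj (Fin.ext h))
      · simp
    have hxne : L.E k *ᵥ x ≠ 0 := by
      rw [hx, Matrix.mulVec_mulVec, tauA_eq, E_mul_aeval, Matrix.smul_mulVec]
      refine smul_ne_zero ?_ (L.E_u_ne hu hu0 k)
      rw [← θN_val]
      exact L.tauP_eval_ne le_rfl hi
    have hE0 : L.E 0 *ᵥ x = 0 := by
      rw [hx, Matrix.mulVec_mulVec, E_tau_zero _ _ _ (by simp), Matrix.zero_mulVec]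
    have hxw : x = (v' ⬝ᵥ x) • w := by
      conv_lhs => rw [hxk, hwv, vecMulVec_mulVec]
      simp
    have hne : v' ⬝ᵥ x ≠ 0 := by
      intro h
      rw [hxw, h] at hxne
      simp at hxne
    apply L.E0_Es_ne k
    rw [hxw, Matrix.mulVec_smul] at hE0
    rw [hwv, Matrix.mul_vecMulVec, (smul_eq_zero.1 hE0).resolve_left hne]
    simp

lemma varphi_mul (L : LeonardSystem K d) (i : ℕ) (hi : i + 1 ≤ d) :
    L.varphi (i+1) * (L.tauA i * L.Estar 0).trace =
      (L.θsN 0 - L.θsN (i+1)) * (L.tauA (i+1) * L.Estar 0).trace := by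
  rw [varphi, Nat.add_sub_cancel, div_mul_cancel₀ _ (L.trace_tau_ne i (by omega))]

lemma varphi_ne (L : LeonardSystem K d) (i : ℕ) (hi : i + 1 ≤ d) : L.varphi (i+1) ≠ 0 := by
  intro h
  have := L.varphi_mul i hi
  rw [h, zero_mul] at this
  exact mul_ne_zero (sub_ne_zero.2 (L.θsN_ne (by omega) hi (by omega))) (L.trace_tau_ne _ hi)
    this.symm

lemma step_varphi (L : LeonardSystem K d) (i : ℕ) (hi : i + 1 ≤ d) :
    (L.Astar - L.θsN (i+1) • 1) * (L.tauA (i+1) * L.Estar 0) =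
      L.varphi (i+1) • (L.tauA i * L.Estar 0) := by
  obtain ⟨c, hc⟩ := L.step_mat i hi
  have h1 := L.step_trace i c hc
  rw [← L.varphi_mul i hi] at h1
  rw [hc, mul_right_cancel₀ (L.trace_tau_ne i (by omega)) h1]

lemma varphiProd_eq (L : LeonardSystem K d) (i : ℕ) (hi : i ≤ d) :
    L.varphiProd i = (∏ j ∈ Finset.range i, (L.θsN 0 - L.θsN (j+1))) *
      (L.tauA i * L.Estar 0).trace := by
  induction i with
  | zero => simp [varphiProd, tauA, trace_Es0]
  | succ i ih =>
    have h := L.varphi_mul i hi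
    have ih := ih (by omega)
    rw [varphiProd] at ih ⊢
    rw [Finset.prod_range_succ, Finset.prod_range_succ, ih, mul_assoc, mul_comm _ (L.varphi _), h]
    ring

/-! Transfer to the second split sequence. -/

lemma revtrans_tauA (L : LeonardSystem K d) (i : ℕ) (hi : i ≤ d + 1) :
    L.revL.transL.tauA i = (L.etaA i)ᵀ := by
  have hc : ∀ i, L.revL.transL.tauA i = (L.revL.tauA i)ᵀ := by
    intro i
    induction i with
    | zero => simp [tauA]
    | succ i ih =>
      have h1 : L.revL.transL.A - L.revL.transL.θN i • 1 = (L.revL.A - L.revL.θN i • 1)ᵀ := by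
        rw [Matrix.transpose_sub, Matrix.transpose_smul, Matrix.transpose_one]
        rfl
      have h2 : Commute (L.revL.tauA i) (L.revL.A - L.revL.θN i • 1) := by
        rw [tauA_eq]
        have : L.revL.A - L.revL.θN i • 1 = aeval L.revL.A (X - C (L.revL.θN i)) := by
          simp [Algebra.algebraMap_eq_smul_one]
        rw [this]
        rw [Commute, SemiconjBy, ← map_mul, ← map_mul, mul_comm]
      rw [tauA, tauA, ih, h1, ← Matrix.transpose_mul, h2.eq]
  rw [hc]
  congr 1
  induction i with
  | zero => simp [tauA, etaA]
  | succ i ih =>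
    have h1 : L.revL.θN i = L.θN (d - i) := by
      simp only [θN, revL, show i < d+1 by omega, show d - i < d + 1 by omega, dif_pos]
      congr 1
      ext
      simp
    rw [tauA, etaA, ih (by omega), h1]
    rfl

lemma revtrans_trace (L : LeonardSystem K d) (i : ℕ) (hi : i ≤ d + 1) :
    (L.revL.transL.tauA i * L.revL.transL.Estar 0).trace = (L.etaA i * L.Estar 0).trace := by
  rw [revtrans_tauA L i hi]
  change ((L.etaA i)ᵀ * (L.Estar 0)ᵀ).trace = _
  rw [← Matrix.transpose_mul, Matrix.trace_transpose, Matrix.trace_mul_comm]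

lemma revtrans_varphi (L : LeonardSystem K d) (i : ℕ) (hi : i ≤ d + 1) :
    L.revL.transL.varphi i = L.phi i := by
  rw [varphi, phi, revtrans_trace L i hi, revtrans_trace L (i-1) (by omega)]
  rfl

lemma phi_ne (L : LeonardSystem K d) (i : ℕ) (hi : i + 1 ≤ d) : L.phi (i+1) ≠ 0 := by
  rw [← revtrans_varphi _ _ (by omega)]
  exact varphi_ne _ _ hi

lemma step_phi (L : LeonardSystem K d) (i : ℕ) (hi : i + 1 ≤ d) :
    L.Estar 0 * L.etaA (i+1) * (L.Astar - L.θsN (i+1) • 1) =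
      L.phi (i+1) • (L.Estar 0 * L.etaA i) := by
  have h := L.revL.transL.step_varphi i hi
  rw [revtrans_tauA L _ (by omega), revtrans_tauA L _ (by omega),
    revtrans_varphi _ _ (by omega)] at h
  change ((L.Astar)ᵀ - L.θsN (i+1) • 1) * ((L.etaA (i+1))ᵀ * (L.Estar 0)ᵀ) =
    L.phi (i+1) • ((L.etaA i)ᵀ * (L.Estar 0)ᵀ) at h
  have h2 := congrArg Matrix.transpose h
  simpa [Matrix.transpose_mul, Matrix.transpose_smul] using h2

lemma phiProd_eq (L : LeonardSystem K d) (i : ℕ) (hi : i ≤ d) :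
    L.phiProd i = (∏ j ∈ Finset.range i, (L.θsN 0 - L.θsN (j+1))) *
      (L.etaA i * L.Estar 0).trace := by
  have h := L.revL.transL.varphiProd_eq i hi
  rw [revtrans_trace L _ (by omega)] at h
  change _ = (∏ j ∈ Finset.range i, (L.θsN 0 - L.θsN (j+1))) * _ at h
  rw [← h, phiProd, varphiProd]
  refine Finset.prod_congr rfl fun j hj => ?_
  rw [revtrans_varphi _ _ (by have := Finset.mem_range.1 hj; omega)]

lemma etasS_eq (L : LeonardSystem K d) :
    L.etasS d (L.θs 0) = ∏ j ∈ Finset.range d, (L.θsN 0 - L.θsN (j+1)) := by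
  rw [etasS, ← Finset.prod_range_reflect, ← θsN_val]
  refine Finset.prod_congr rfl fun j hj => ?_
  have := Finset.mem_range.1 hj
  rw [show d - (d - 1 - j) = j + 1 by omega]
  rfl

lemma etasS_ne (L : LeonardSystem K d) : L.etasS d (L.θs 0) ≠ 0 := by
  rw [etasS_eq, Finset.prod_ne_zero_iff]
  intro j hj
  have := Finset.mem_range.1 hj
  exact sub_ne_zero.2 (L.θsN_ne (by omega) (by omega) (by omega))

lemma etaP_eval_zero (L : LeonardSystem K d) {i j : ℕ} (hj : j ≤ d) (h : d < j + i) :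
    (L.etaP i).eval (L.θN j) = 0 := by
  rw [etaP, eval_prod]
  refine Finset.prod_eq_zero (i := d - j) (Finset.mem_range.2 (by omega)) ?_
  rw [show d - (d - j) = j by omega]
  simp

lemma etaP_eval_ne (L : LeonardSystem K d) {i j : ℕ} (h : i + j ≤ d) :
    (L.etaP i).eval (L.θN j) ≠ 0 := by
  rw [etaP, eval_prod, Finset.prod_ne_zero_iff]
  intro k hk
  have := Finset.mem_range.1 hk
  simpa [sub_eq_zero] using L.θN_ne (i := j) (j := d - k) (by omega) (by omega) (by omega)

lemma eta_tau_zero (L : LeonardSystem K d) (r s : ℕ) (h : d < r + s) :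
    L.etaA s * L.tauA r = 0 := by
  rw [etaA_eq, tauA_eq, ← map_mul, aeval_eq]
  apply Finset.sum_eq_zero
  intro j _
  rw [eval_mul, ← θN_val]
  by_cases hj : (j : ℕ) < r
  · rw [L.tauP_eval_zero hj]; simp
  · rw [L.etaP_eval_zero (by omega) (by omega)]; simp

lemma eta_tau_E (L : LeonardSystem K d) (r : Fin (d+1)) :
    L.etaA (d - r) * L.tauA r =
      (L.tauS r (L.θ r) * L.etaS (d - r) (L.θ r)) • L.E r := by
  rw [etaA_eq, tauA_eq, ← map_mul, aeval_eq, Finset.sum_eq_single r]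
  · congr 1
    simp [tauP, etaP, tauS, etaS, eval_prod, mul_comm]
  · intro j _ hj
    have hj' : (j : ℕ) ≠ r := fun h => hj (Fin.ext h)
    rw [eval_mul, ← θN_val]
    by_cases hj : (j : ℕ) < r
    · rw [L.tauP_eval_zero hj]; simp
    · rw [L.etaP_eval_zero (by omega) (by omega)]; simp
  · simp

lemma diag_step (L : LeonardSystem K d) (r s : ℕ) (h : r + s + 1 = d) :
    L.phi (s+1) * (L.etaA s * L.tauA (r+1) * L.Estar 0).trace =
      L.varphi (r+1) * (L.etaA (s+1) * L.tauA r * L.Estar 0).trace := by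
  have h1 := L.step_phi s (by omega)
  have h2 := L.step_varphi r (by omega)
  have h0 := L.eta_tau_zero (r+1) (s+1) (by omega)
  have e1 : L.phi (s+1) • (L.Estar 0 * (L.etaA s * L.tauA (r+1)) * L.Estar 0) =
      L.Estar 0 * L.etaA (s+1) * L.Astar * L.tauA (r+1) * L.Estar 0 := by
    have : L.phi (s+1) • (L.Estar 0 * (L.etaA s * L.tauA (r+1)) * L.Estar 0) =
      (L.phi (s+1) • (L.Estar 0 * L.etaA s)) * L.tauA (r+1) * L.Estar 0 := by
      simp only [smul_mul_assoc, mul_assoc]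
    rw [this, ← h1, mul_sub, sub_mul, sub_mul]
    simp only [mul_smul_comm, mul_one, smul_mul_assoc]
    rw [mul_assoc (L.Estar 0) (L.etaA (s+1)) (L.tauA (r+1)), h0]
    simp
  have e2 : L.varphi (r+1) • (L.Estar 0 * (L.etaA (s+1) * L.tauA r) * L.Estar 0) =
      L.Estar 0 * L.etaA (s+1) * L.Astar * L.tauA (r+1) * L.Estar 0 := by
    have : L.varphi (r+1) • (L.Estar 0 * (L.etaA (s+1) * L.tauA r) * L.Estar 0) =
      L.Estar 0 * L.etaA (s+1) * (L.varphi (r+1) • (L.tauA r * L.Estar 0)) := by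
      simp only [mul_smul_comm, mul_assoc]
    rw [this, ← h2, sub_mul, mul_sub]
    simp only [mul_smul_comm, one_mul, smul_mul_assoc]
    rw [← mul_assoc (L.Estar 0 * L.etaA (s+1)) (L.tauA (r+1)),
      mul_assoc (L.Estar 0) (L.etaA (s+1)) (L.tauA (r+1)), h0]
    simp [mul_assoc]
  have e3 := congrArg Matrix.trace (e1.trans e2.symm)
  simpa only [Matrix.trace_smul, trace_Es0_mul, smul_eq_mul] using e3

lemma diag_eq (L : LeonardSystem K d) (r : ℕ) : r ≤ d →
    (L.etaA (d - r) * L.tauA r * L.Estar 0).trace * L.etasS d (L.θs 0) =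
      L.varphiProd r * L.phiProd (d - r) := by
  induction r with
  | zero =>
    intro _
    rw [Nat.sub_zero, L.phiProd_eq d le_rfl, etasS_eq]
    simp [tauA, varphiProd, mul_comm]
  | succ r ih =>
    intro hr
    have ih := ih (by omega)
    obtain ⟨s, rfl⟩ : ∃ s, d = r + s + 1 := ⟨d - r - 1, by omega⟩
    have hs := L.diag_step r s rfl
    have hne := L.phi_ne s (by omega)
    rw [show r + s + 1 - r = s + 1 by omega] at ih
    rw [show r + s + 1 - (r + 1) = s by omega]
    have e1 : L.phiProd (s+1) = L.phiProd s * L.phi (s+1) := by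
      rw [phiProd, Finset.prod_range_succ]; rfl
    have e2 : L.varphiProd (r+1) = L.varphiProd r * L.varphi (r+1) := by
      rw [varphiProd, Finset.prod_range_succ]; rfl
    rw [e1] at ih
    rw [e2]
    apply mul_left_cancel₀ hne
    linear_combination (L.etasS (r+s+1) (L.θs 0)) * hs + L.varphi (r+1) * ih

end aux

end LeonardSystem

/-- `tr(E_r E*_0) = φ_1⋯φ_r ϕ_1⋯ϕ_{d-r} / (η*_d(θ*_0) τ_r(θ_r) η_{d-r}(θ_r))`. -/
theorem LeonardSystem.trace_ErEs0 {K : Type*} [Field K] {d : ℕ}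
    (L : LeonardSystem K d) :
    ∀ r : Fin (d+1),
      (L.E r * L.Estar 0).trace =
        L.varphiProd (r : ℕ) * L.phiProd (d - (r : ℕ)) /
          (L.etasS d (L.θs 0) * L.tauS (r : ℕ) (L.θ r) * L.etaS (d - (r : ℕ)) (L.θ r)) := by
  intro r
  have h := L.diag_eq r (by omega)
  rw [eta_tau_E, smul_mul_assoc, Matrix.trace_smul, smul_eq_mul] at h
  have h1 : L.tauS r (L.θ r) ≠ 0 := by
    have := L.tauP_eval_ne (i := r) (j := r) le_rfl (by omega)
    simpa only [tauP, tauS, eval_prod, eval_sub, eval_X, eval_C, θN_val] using this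
  have h2 : L.etaS (d - r) (L.θ r) ≠ 0 := by
    have := L.etaP_eval_ne (i := d - r) (j := r) (by omega)
    simpa only [etaP, etaS, eval_prod, eval_sub, eval_X, eval_C, θN_val] using this
  rw [eq_div_iff (mul_ne_zero (mul_ne_zero L.etasS_ne h1) h2), ← h]
  ring
end

section
/- Let Φ be a Leonard system with bilinear form ⟨·,·⟩, and let ξ_0 ∈ E_0V, ξ_d ∈ E_dV, ξ*_0 ∈ E*_0V, ξ*_d ∈ E*_dV be nonzero vectors. Then ⟨ξ_0,ξ*_0⟩, ⟨ξ_0,ξ*_d⟩, ⟨ξ_d,ξ*_0⟩, ⟨ξ_d,ξ*_d⟩, ⟨ξ_0,ξ_0⟩, ⟨ξ_d,ξ_d⟩, ⟨ξ*_0,ξ*_0⟩, ⟨ξ*_d,ξ*_d⟩ are all nonzero. -/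
open Matrix Polynomial

namespace LeonardAux

variable {K : Type*} [Field K] {d : ℕ}

/-- Each idempotent in a full orthogonal family has rank one. -/
lemma rank_one (F : Fin (d+1) → Matrix (Fin (d+1)) (Fin (d+1)) K)
    (hne : ∀ i, F i ≠ 0) (hmul : ∀ i j, F i * F j = if i = j then F i else 0)
    (i : Fin (d+1)) (x : Fin (d+1) → K) (hx : x ≠ 0) (hFx : (F i).mulVec x = x)
    (w : Fin (d+1) → K) : ∃ c : K, (F i).mulVec w = c • x := by
  have hex : ∀ j, ∃ v : Fin (d+1) → K, v ≠ 0 ∧ (F j).mulVec v = v ∧ (j = i → v = x) := by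
    intro j
    by_cases hj : j = i
    · subst hj
      exact ⟨x, hx, hFx, fun _ => rfl⟩
    · have : ∃ u, (F j).mulVec u ≠ 0 := by
        by_contra! h
        apply hne j
        apply Matrix.mulVec_injective
        funext u
        simp [h u]
      obtain ⟨u, hu⟩ := this
      refine ⟨(F j).mulVec u, hu, ?_, fun h => absurd h hj⟩
      rw [Matrix.mulVec_mulVec, hmul, if_pos rfl]
  choose v hv hFv hvi using hex
  have hoff : ∀ k j, k ≠ j → (F k).mulVec (v j) = 0 := by
    intro k j hkj
    rw [← hFv j, Matrix.mulVec_mulVec, hmul, if_neg hkj, Matrix.zero_mulVec]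
  have key : ∀ (g : Fin (d+1) → K) k, (F k).mulVec (∑ j, g j • v j) = g k • v k := by
    intro g k
    rw [Matrix.mulVec_sum, Finset.sum_eq_single k]
    · rw [Matrix.mulVec_smul, hFv]
    · intro j _ hj
      rw [Matrix.mulVec_smul, hoff k j hj.symm, smul_zero]
    · simp
  have hli : LinearIndependent K v := by
    rw [Fintype.linearIndependent_iff]
    intro g hg k
    have h := key g k
    rw [hg, Matrix.mulVec_zero] at h
    exact (smul_eq_zero.mp h.symm).resolve_right (hv k)
  let b := basisOfLinearIndependentOfCardEqFinrank hli (by simp)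
  have hb : ⇑b = v := coe_basisOfLinearIndependentOfCardEqFinrank hli (by simp)
  refine ⟨b.repr w i, ?_⟩
  have h := b.sum_repr w
  rw [hb] at h
  conv_lhs => rw [← h]
  rw [key, hvi i rfl]

lemma sum_mulVec_self (F : Fin (d+1) → Matrix (Fin (d+1)) (Fin (d+1)) K)
    (hsum : ∑ i, F i = 1) (w : Fin (d+1) → K) : ∑ i, (F i).mulVec w = w := by
  rw [← Matrix.sum_mulVec, hsum, Matrix.one_mulVec]

/-- An invariant subspace of an irreducible tridiagonal matrix containing the first
vector is everything. -/
lemma cyclic (F : Fin (d+1) → Matrix (Fin (d+1)) (Fin (d+1)) K)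
    (M : Matrix (Fin (d+1)) (Fin (d+1)) K)
    (hne : ∀ i, F i ≠ 0) (hmul : ∀ i j, F i * F j = if i = j then F i else 0)
    (hsum : ∑ i, F i = 1)
    (h0 : ∀ i j : Fin (d+1), ((i : ℤ) - (j : ℤ)).natAbs > 1 → F i * M * F j = 0)
    (h1 : ∀ i j : Fin (d+1), ((i : ℤ) - (j : ℤ)).natAbs = 1 → F i * M * F j ≠ 0)
    (W : Submodule K (Fin (d+1) → K)) (hW : ∀ v ∈ W, M.mulVec v ∈ W)
    (x : Fin (d+1) → K) (hx : x ≠ 0) (hFx : (F 0).mulVec x = x) (hxW : x ∈ W)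
    (w : Fin (d+1) → K) : w ∈ W := by
  have hrep : ∀ i (z : Fin (d+1) → K), z ≠ 0 → (F i).mulVec z = z → z ∈ W →
      ∀ w, (F i).mulVec w ∈ W := by
    intro i z hz hFz hzW w
    obtain ⟨c, hc⟩ := rank_one F hne hmul i z hz hFz w
    rw [hc]
    exact W.smul_mem c hzW
  have main : ∀ n (hn : n < d + 1), ∀ w, (F ⟨n, hn⟩).mulVec w ∈ W := by
    intro n
    induction n using Nat.strong_induction_on with
    | _ n ih =>
      intro hn
      rcases n with _ | n
      · exact hrep 0 x hx hFx hxW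
      · have hn' : n < d + 1 := by omega
        have hnz := h1 ⟨n+1, hn⟩ ⟨n, hn'⟩ (by simp)
        have : ∃ u, (F ⟨n+1, hn⟩ * M * F ⟨n, hn'⟩).mulVec u ≠ 0 := by
          by_contra! h
          apply hnz
          apply Matrix.mulVec_injective
          funext u
          simp [h u]
        obtain ⟨u, hu⟩ := this
        have hMu : M.mulVec ((F ⟨n, hn'⟩).mulVec u) ∈ W :=
          hW _ (ih n (by omega) hn' u)
        refine hrep ⟨n+1, hn⟩ ((F ⟨n+1, hn⟩ * M * F ⟨n, hn'⟩).mulVec u) hu ?_ ?_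
        · rw [Matrix.mulVec_mulVec, ← mul_assoc, ← mul_assoc, hmul, if_pos rfl]
        · have hs := sum_mulVec_self F hsum (M.mulVec ((F ⟨n, hn'⟩).mulVec u))
          rw [← Finset.add_sum_erase _ _ (Finset.mem_univ (⟨n+1, hn⟩ : Fin (d+1)))] at hs
          have he : (F ⟨n+1, hn⟩ * M * F ⟨n, hn'⟩).mulVec u =
              (F ⟨n+1, hn⟩).mulVec (M.mulVec ((F ⟨n, hn'⟩).mulVec u)) := by
            simp [Matrix.mulVec_mulVec, mul_assoc]
          rw [he, eq_sub_of_add_eq hs]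
          refine W.sub_mem hMu (W.sum_mem ?_)
          intro j hj
          have hjne : j ≠ ⟨n+1, hn⟩ := (Finset.mem_erase.mp hj).1
          have hjv : (j : ℕ) ≠ n + 1 := fun h => hjne (Fin.ext h)
          by_cases hlt : (j : ℕ) < n + 1
          · exact ih j hlt j.isLt _
          · have hz := h0 j ⟨n, hn'⟩ (by simp only; omega)
            have : (F j).mulVec (M.mulVec ((F ⟨n, hn'⟩).mulVec u)) =
                (F j * M * F ⟨n, hn'⟩).mulVec u := by
              simp [Matrix.mulVec_mulVec, mul_assoc]
            rw [this, hz, Matrix.zero_mulVec]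
            exact W.zero_mem
  rw [← sum_mulVec_self F hsum w]
  exact W.sum_mem fun j _ => main j j.isLt w

lemma eigen (F : Fin (d+1) → Matrix (Fin (d+1)) (Fin (d+1)) K)
    (M : Matrix (Fin (d+1)) (Fin (d+1)) K) (θ : Fin (d+1) → K)
    (hmul : ∀ i j, F i * F j = if i = j then F i else 0)
    (hM : M = ∑ i, θ i • F i) (i : Fin (d+1)) (x : Fin (d+1) → K)
    (hFx : (F i).mulVec x = x) : M.mulVec x = θ i • x := by
  have h : M * F i = θ i • F i := by
    rw [hM, Finset.sum_mul, Finset.sum_eq_single i]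
    · rw [smul_mul_assoc, hmul, if_pos rfl]
    · intro j _ hj
      rw [smul_mul_assoc, hmul, if_neg hj, smul_zero]
    · simp
  conv_lhs => rw [← hFx]
  rw [Matrix.mulVec_mulVec, h, Matrix.smul_mulVec, hFx]

/-- Eigenvectors of a self-adjoint multiplicity-free matrix have nonzero square norm. -/
lemma norm_ne (F : Fin (d+1) → Matrix (Fin (d+1)) (Fin (d+1)) K)
    (M : Matrix (Fin (d+1)) (Fin (d+1)) K) (θ : Fin (d+1) → K)
    (hinj : Function.Injective θ)
    (hne : ∀ i, F i ≠ 0) (hmul : ∀ i j, F i * F j = if i = j then F i else 0)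
    (hsum : ∑ i, F i = 1) (hM : M = ∑ i, θ i • F i)
    (B : (Fin (d+1) → K) →ₗ[K] (Fin (d+1) → K) →ₗ[K] K)
    (hsa : ∀ u v, B (M.mulVec u) v = B u (M.mulVec v))
    (hnd : ∀ u, u ≠ 0 → ∃ v, B u v ≠ 0)
    (i : Fin (d+1)) (x : Fin (d+1) → K) (hx : x ≠ 0) (hFx : (F i).mulVec x = x) :
    B x x ≠ 0 := by
  intro h0
  obtain ⟨w, hw⟩ := hnd x hx
  apply hw
  rw [← sum_mulVec_self F hsum w, map_sum]
  refine Finset.sum_eq_zero fun j _ => ?_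
  by_cases hj : j = i
  · subst hj
    obtain ⟨c, hc⟩ := rank_one F hne hmul j x hx hFx w
    rw [hc, map_smul, h0, smul_zero]
  · have h := hsa x ((F j).mulVec w)
    rw [eigen F M θ hmul hM i x hFx, eigen F M θ hmul hM j ((F j).mulVec w)
      (by rw [Matrix.mulVec_mulVec, hmul, if_pos rfl]), map_smul, map_smul,
      LinearMap.smul_apply, smul_eq_mul, smul_eq_mul] at h
    have h' : (θ i - θ j) * B x ((F j).mulVec w) = 0 := by rw [sub_mul, h, sub_self]
    exact (mul_eq_zero.mp h').resolve_left
      (sub_ne_zero.mpr fun e => hj (hinj e).symm)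

end LeonardAux

/-- For nonzero `ξ_0 ∈ E_0V`, `ξ_d ∈ E_dV`, `ξ*_0 ∈ E*_0V`, `ξ*_d ∈ E*_dV`, the
eight inner products `⟨ξ_0,ξ*_0⟩, ⟨ξ_0,ξ*_d⟩, ⟨ξ_d,ξ*_0⟩, ⟨ξ_d,ξ*_d⟩, ⟨ξ_0,ξ_0⟩,
⟨ξ_d,ξ_d⟩, ⟨ξ*_0,ξ*_0⟩, ⟨ξ*_d,ξ*_d⟩` are all nonzero. -/
theorem LeonardSystem.bilin_ne_zero {K : Type*} [Field K] {d : ℕ}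
    (L : LeonardSystem K d)
    (σ : (Matrix (Fin (d+1)) (Fin (d+1)) K) →ₗ[K] Matrix (Fin (d+1)) (Fin (d+1)) K)
    (hanti : ∀ X Y, σ (X * Y) = σ Y * σ X) (hbij : Function.Bijective σ)
    (hA : σ L.A = L.A) (hAs : σ L.Astar = L.Astar)
    (B : (Fin (d+1) → K) →ₗ[K] (Fin (d+1) → K) →ₗ[K] K) (hB : B ≠ 0)
    (hcomp : ∀ (X : Matrix (Fin (d+1)) (Fin (d+1)) K) (u v : Fin (d+1) → K),
      B (X.mulVec u) v = B u ((σ X).mulVec v))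
    (ξ0 ξd ξs0 ξsd : Fin (d+1) → K)
    (hξ0 : ξ0 ≠ 0) (hξd : ξd ≠ 0) (hξs0 : ξs0 ≠ 0) (hξsd : ξsd ≠ 0)
    (hE0 : (L.E 0).mulVec ξ0 = ξ0) (hEd : (L.E (Fin.last d)).mulVec ξd = ξd)
    (hEs0 : (L.Estar 0).mulVec ξs0 = ξs0) (hEsd : (L.Estar (Fin.last d)).mulVec ξsd = ξsd) :
    B ξ0 ξs0 ≠ 0 ∧ B ξ0 ξsd ≠ 0 ∧ B ξd ξs0 ≠ 0 ∧ B ξd ξsd ≠ 0 ∧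
    B ξ0 ξ0 ≠ 0 ∧ B ξd ξd ≠ 0 ∧ B ξs0 ξs0 ≠ 0 ∧ B ξsd ξsd ≠ 0 := by
  have hsaA : ∀ u v, B (L.A.mulVec u) v = B u (L.A.mulVec v) := by
    intro u v
    rw [hcomp, hA]
  have hsaAs : ∀ u v, B (L.Astar.mulVec u) v = B u (L.Astar.mulVec v) := by
    intro u v
    rw [hcomp, hAs]
  have hnd : ∀ u, u ≠ 0 → ∃ v, B u v ≠ 0 := by
    intro u hu
    by_contra! h
    apply hB
    ext1
    ext1
    simp only [LinearMap.comp_apply, LinearMap.zero_apply]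
    rename_i k
    obtain ⟨m, hm⟩ : ∃ m, u m ≠ 0 := by
      by_contra! h'
      exact hu (funext h')
    have hX : (Matrix.single k m (u m)⁻¹).mulVec u = Pi.single k 1 := by
      ext a
      simp [Matrix.single_mulVec, hm, Function.update, Pi.single_apply]
    ext l
    have := hcomp (Matrix.single k m (u m)⁻¹) u (Pi.single l 1)
    rw [h, hX] at this
    simpa using this
  have cross : ∀ (i : Fin (d+1)) (x y : Fin (d+1) → K), x ≠ 0 → y ≠ 0 →
      (L.E i).mulVec x = x →
      ((L.Estar 0).mulVec y = y ∨ (L.Estar (Fin.last d)).mulVec y = y) → B x y ≠ 0 := by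
    intro i x y hx hy hEx hEy h0
    obtain ⟨w, hw⟩ := hnd x hx
    apply hw
    have hinv : ∀ v ∈ LinearMap.ker (B x), L.A.mulVec v ∈ LinearMap.ker (B x) := by
      intro v hv
      rw [LinearMap.mem_ker] at hv ⊢
      rw [← hsaA, LeonardAux.eigen L.E L.A L.θ L.E_mul L.A_eq i x hEx, map_smul,
        LinearMap.smul_apply, hv, smul_zero]
    rcases hEy with hEy | hEy
    · exact LeonardAux.cyclic L.Estar L.A L.Es_ne L.Es_mul L.Es_sum L.strid0 L.strid1
        (LinearMap.ker (B x)) hinv y hy hEy h0 w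
    · refine LeonardAux.cyclic (fun j => L.Estar (Fin.rev j)) L.A (fun j => L.Es_ne _) ?_ ?_ ?_ ?_
        (LinearMap.ker (B x)) hinv y hy (by simpa using hEy) h0 w
      · intro a b
        simp [L.Es_mul]
      · rw [← L.Es_sum]
        exact Equiv.sum_comp Fin.revPerm L.Estar
      · intro a b hab
        apply L.strid0
        simp only [Fin.val_rev]
        omega
      · intro a b hab
        apply L.strid1
        simp only [Fin.val_rev]
        omega
  have nE := LeonardAux.norm_ne L.E L.A L.θ L.θ_inj L.E_ne L.E_mul L.E_sum L.A_eq B hsaA hnd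
  have nEs := LeonardAux.norm_ne L.Estar L.Astar L.θs L.θs_inj L.Es_ne L.Es_mul L.Es_sum
    L.As_eq B hsaAs hnd
  exact ⟨cross _ _ _ hξ0 hξs0 hE0 (Or.inl hEs0), cross _ _ _ hξ0 hξsd hE0 (Or.inr hEsd),
    cross _ _ _ hξd hξs0 hEd (Or.inl hEs0), cross _ _ _ hξd hξsd hEd (Or.inr hEsd),
    nE _ _ hξ0 hE0, nE _ _ hξd hEd, nEs _ _ hξs0 hEs0, nEs _ _ hξsd hEsd⟩
end
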